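/- Assume the kernel K is given by K^Ft(t) = (1 − t^r)^s·1(|t| ≤ 1) with r ≥ 2 an even integer, s ≥ 1 an integer, and r > β + 1/2. Then for all C_1, C_2 > 0 there exists B > 0, depending only on C_1, C_2, r, s, α and β, such that for all 0 ≤ h ≤ 1 and n ≥ 1: sup over F_δ ∈ ℱ_3(α,C_1) and F_W ∈ 𝒢_3(β,C_2) of ∫_{-∞}^{∞} E{F̂_W(x|h) − F_W(x)}^2 dx is at most B{h^{2β+1} + n^{-1}(1 + h^{-(2α−1)}ℓ_h)}. -/

import Mathlib

/-!
Write `A_k(u) = (2π)⁻¹ ∫ sin(tu)/t k(t) dt − sign(u)/2` (`Adev` below). Both parts of the mean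
squared error are governed by such functions. With `k_b(t) = K^Ft(ht)` and
`k_v(t) = K^Ft(ht)/f_δ(t)`, the bias of `F̂_W(x|h)` is `∫ A_{k_b}(x − w) dF_W(w)` for almost
every `x`, while the variance at `x` is at most `n⁻¹` times the second moment of
`L₁(x − X|h) − 1_{x > 0}`, and `L₁(u|h) − 1_{u > 0} = A_{k_v}(u)`; the translation by `X` costs at
most `E|X| ≤ C₁ + C₂` after integration over `x`.

Since `sign(u) = π⁻¹ ∫ sin(tu)/t dt` conditionally, `∫ A_k(x − w) dμ(w)` is formally the Fourier
transform of `((k(t) − 1)/t) φ_μ(t)`, and Plancherel's theorem bounds its squared `L²` norm by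
`∫ ((k(t) − 1)/t)² |φ_μ(t)|² dt` (`lintegral_dev_sq_le`). Convergence is handled by damping the
integrand with the Gaussian `exp(−t²/(4m²))` and letting `m → ∞` with Fatou's lemma.
Taking `μ = F_W` gives the bias and `μ` a point mass at `0` the variance: `lintegral_riskSq_le`.

It remains to bound two explicit integrals. The bias integral scales as `h^{2β+1}`; the constant is
finite because `1 − K^Ft(y) = O(|y|^r)` with `r > β + 1/2`. For the variance integral,
`|1 − f_δ(t)| ≤ C₁|t|` (finite first absolute moment), so `(k_v(t) − 1)/t` is bounded for
`|t| ≤ 1`, and for `|t| > 1` the lower bound on `f_δ` gives an integrand of order `|t|^{2α−2}` on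
`1 < |t| ≤ 1/h`.

A bounded density together with a positive characteristic function forces `f_δ` to be integrable
(test against Gaussians), hence `α > 1` whenever the class `ℱ₃(α, C₁)` is nonempty
(`one_lt_of_memF3`). In particular `ℓ_h = 1`, and at `h = 0` the bound is infinite.
-/

open MeasureTheory Filter Topology
open scoped ENNReal ProbabilityTheory

noncomputable section

/-- Characteristic function of a measure on `ℝ`. -/
def charFn (μ : Measure ℝ) (t : ℝ) : ℂ :=
  ∫ x, Complex.exp (Complex.I * (t * x)) ∂μ

/-- `μ` is a probability measure whose characteristic function is the real-valued,
everywhere equal to `f`. -/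
def realCharFn (μ : Measure ℝ) (f : ℝ → ℝ) : Prop :=
  IsProbabilityMeasure μ ∧ ∀ t, charFn μ t = (f t : ℂ)

/-- Cumulative distribution function of a measure on `ℝ`. -/
def cdfF (μ : Measure ℝ) (x : ℝ) : ℝ :=
  (μ (Set.Iic x)).toReal

/-- Law of the observed sample `X_1, …, X_n`, where `X_j = W_j + δ_j`, the `W_j`
are i.i.d. with law `μW` and the `δ_j` are i.i.d. with law `μδ`, independent of
the `W_j`'s. -/
def sampleLaw (μW μδ : Measure ℝ) (n : ℕ) : Measure (Fin n → ℝ) :=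
  Measure.pi fun _ => (μW.prod μδ).map fun p => p.1 + p.2

/-- `E |x| ^ p ≤ C` for the measure `μ`. -/
def absMomBdd (μ : Measure ℝ) (p C : ℝ) : Prop :=
  ∫⁻ x, ENNReal.ofReal (|x| ^ p) ∂μ ≤ ENNReal.ofReal C

/-- `μ` has a (Lebesgue) density bounded by `C`. -/
def hasDensityBdd (μ : Measure ℝ) (C : ℝ) : Prop :=
  ∃ f : ℝ → ℝ, Measurable f ∧ (∀ x, 0 ≤ f x) ∧ (∀ x, f x ≤ C) ∧
    μ = volume.withDensity fun x => ENNReal.ofReal (f x)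

/-- Fourier transform of the polynomial kernel: `K^Ft(t) = (1 - t^r)^s 1(|t| ≤ 1)`. -/
def polyKFt (r s : ℕ) (t : ℝ) : ℝ :=
  if |t| ≤ 1 then (1 - t ^ r) ^ s else 0

/-- The function `L₁(u|h) = 1/2 + (2π)⁻¹ ∫ (sin(tu)/t) K^Ft(ht)/f_δ^Ft(t) dt`,
where `fδ` denotes the (real-valued) characteristic function of the error and
`KFt` the Fourier transform of the kernel. -/
def L1fun (fδ KFt : ℝ → ℝ) (h u : ℝ) : ℝ :=
  1 / 2 + (2 * Real.pi)⁻¹ * ∫ t : ℝ, Real.sin (t * u) / t * (KFt (h * t) / fδ t)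

/-- The function `L₁(u|0) = 1/2 + (2π)⁻¹ ∫ (sin(tu)/t) f_δ^Ft(t)⁻¹ dt`. -/
def L1zero (fδ : ℝ → ℝ) (u : ℝ) : ℝ :=
  1 / 2 + (2 * Real.pi)⁻¹ * ∫ t : ℝ, Real.sin (t * u) / (t * fδ t)

/-- The deconvolution distribution estimator `F̂_W(x|h)`. -/
def FhatD (fδ KFt : ℝ → ℝ) (h : ℝ) {n : ℕ} (X : Fin n → ℝ) (x : ℝ) : ℝ :=
  (n : ℝ)⁻¹ * ∑ j, L1fun fδ KFt h (x - X j)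

/-- The deconvolution distribution estimator `F̂_W(x|0)` at bandwidth `0`. -/
def Fhat0 (fδ : ℝ → ℝ) {n : ℕ} (X : Fin n → ℝ) (x : ℝ) : ℝ :=
  (n : ℝ)⁻¹ * ∑ j, L1zero fδ (x - X j)

/-- Mean squared error `E (T(X₁,…,Xₙ) - θ)²` of an estimator `T` of `θ`, the data
being an i.i.d. sample from the convolution of `μW` and `μδ`. -/
def riskSq (μW μδ : Measure ℝ) (n : ℕ) (T : (Fin n → ℝ) → ℝ) (θ : ℝ) : ℝ≥0∞ :=
  ∫⁻ X, ENNReal.ofReal ((T X - θ) ^ 2) ∂sampleLaw μW μδ n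

/-- The class `ℱ₁(C)` of error distributions. -/
def memF1 (C : ℝ) (μ : Measure ℝ) (f : ℝ → ℝ) : Prop :=
  realCharFn μ f ∧ (∀ t, 0 < f t) ∧
    ∫⁻ t in Set.Ioi (0 : ℝ), ENNReal.ofReal (t⁻¹ ^ 2 * ((f t)⁻¹ - 1) ^ 2) ≤ ENNReal.ofReal C

/-- The class `ℱ₂(C)`: members of `ℱ₁(C)` with `E|δ| ≤ C`. -/
def memF2 (C : ℝ) (μ : Measure ℝ) (f : ℝ → ℝ) : Prop :=
  memF1 C μ f ∧ absMomBdd μ 1 C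

/-- The class `ℱ₃(α, C)` of error distributions. -/
def memF3 (α C : ℝ) (μ : Measure ℝ) (f : ℝ → ℝ) : Prop :=
  realCharFn μ f ∧ (∀ t, 0 < f t) ∧ (∀ t, (1 + |t|) ^ (-α) ≤ C * f t) ∧
    hasDensityBdd μ C ∧ absMomBdd μ 1 C

/-- The class `ℱ₄(C, q)` of error distributions (for `2k < q < 2k+2`). -/
def memF4 (C q : ℝ) (k : ℕ) (μ : Measure ℝ) (f : ℝ → ℝ) : Prop :=
  realCharFn μ f ∧ (∀ t, 0 < f t) ∧ absMomBdd μ (4 * (k + 1)) C ∧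
    (∫⁻ t in Set.Ioc (0 : ℝ) 1, ENNReal.ofReal (t ^ (-(2 * (q + 1))) *
        (f t - ∑ j ∈ Finset.range (k + 1),
          (-1 : ℝ) ^ j * t ^ (2 * j) / (2 * j).factorial * ∫ x, x ^ (2 * j) ∂μ) ^ 2)) +
      (∫⁻ t in Set.Ioi (1 : ℝ), ENNReal.ofReal (t ^ (-(2 * (q + 1))) * ((f t)⁻¹) ^ 2)) ≤
      ENNReal.ofReal C

/-- The class `ℱ₅(α, C)`: members of `ℱ₃(α, C)` with `E(δ^{4(k+1)}) ≤ C`. -/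
def memF5 (α C : ℝ) (k : ℕ) (μ : Measure ℝ) (f : ℝ → ℝ) : Prop :=
  memF3 α C μ f ∧ absMomBdd μ (4 * (k + 1)) C

/-- The class `ℱ₆(α, C)`: members of `ℱ₃(α, C)` whose characteristic function has its
first two derivatives bounded analogously. -/
def memF6 (α C : ℝ) (μ : Measure ℝ) (f : ℝ → ℝ) : Prop :=
  memF3 α C μ f ∧ ∀ j ≤ 2, ∀ t, |iteratedDeriv j f t| ≤ C * (1 + |t|) ^ (-α - j)

/-- The class `𝒢₁(C)`: distributions with a density bounded by `C`. -/
def memG1 (C : ℝ) (μ : Measure ℝ) : Prop :=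
  IsProbabilityMeasure μ ∧ hasDensityBdd μ C

/-- The class `𝒢₂(C)`: distributions with `E|W| ≤ C`. -/
def memG2 (C : ℝ) (μ : Measure ℝ) : Prop :=
  IsProbabilityMeasure μ ∧ absMomBdd μ 1 C

/-- The class `𝒢₃(β, C)` of target distributions. -/
def memG3 (β C : ℝ) (μ : Measure ℝ) : Prop :=
  IsProbabilityMeasure μ ∧ (∀ t, ‖charFn μ t‖ ≤ C * (1 + |t|) ^ (-β)) ∧ absMomBdd μ 1 C

/-- `k_β`, the least integer strictly exceeding `β ≥ 0`. -/
def kbeta (β : ℝ) : ℕ := ⌊β⌋₊ + 1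

/-- The class `𝒢₄(β, C)` of target distributions. -/
def memG4 (β C : ℝ) (μ : Measure ℝ) : Prop :=
  memG3 β C μ ∧ ∀ x₀ > (0 : ℝ), ∀ k : ℕ, β < k → ∀ u > (0 : ℝ), ∀ x : ℝ, x₀ < |x| →
    (1 + u) ^ (β - k) *
        ‖∫ t in (0 : ℝ)..u, Complex.exp (Complex.I * (t * x)) * (t : ℂ) ^ k * charFn μ t‖ ≤
      C * k / ((kbeta β - β) * x₀)

/-- The class `𝒢₅(C, k)` of target distributions. -/
def memG5 (C : ℝ) (k : ℕ) (μ : Measure ℝ) : Prop :=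
  IsProbabilityMeasure μ ∧ hasDensityBdd μ C ∧ absMomBdd μ (4 * (k + 1)) C

/-- The class `𝒢₆(β, C)` of target distributions. -/
def memG6 (β C : ℝ) (k : ℕ) (μ : Measure ℝ) : Prop :=
  IsProbabilityMeasure μ ∧ absMomBdd μ (4 * (k + 1)) C ∧
    ∀ j ≤ 2 * k + 2, ∀ t, ‖iteratedDeriv j (charFn μ) t‖ ≤ C * (1 + |t|) ^ (-β - j)

/-- The logarithmic factor `ℓ_h`. -/
def ellh (α h : ℝ) : ℝ := if α = 1 / 2 then 1 + |Real.log h| else 1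

/-- The logarithmic factor `ℓ = ℓ(n)`. -/
def ellN (α : ℝ) (n : ℕ) : ℝ := if α = 1 / 2 then Real.log n else 1

/-- The deconvolution density estimator `f̂_W(u|h)`. -/
def fhatDen (fδ KFt : ℝ → ℝ) (h : ℝ) {n : ℕ} (X : Fin n → ℝ) (u : ℝ) : ℝ :=
  (n : ℝ)⁻¹ * ∑ j, (2 * Real.pi)⁻¹ * ∫ t : ℝ, Real.cos (t * (u - X j)) * (KFt (h * t) / fδ t)

/-- The absolute-moment estimator `ν̂_q(h) = ∫ |u|^q dF̂_W(u|h)`. -/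
def nuHat (fδ KFt : ℝ → ℝ) (h q : ℝ) {n : ℕ} (X : Fin n → ℝ) : ℝ :=
  ∫ u : ℝ, |u| ^ q * fhatDen fδ KFt h X u

/-- The absolute moment `ν_q = E|W|^q`. -/
def nuq (μ : Measure ℝ) (q : ℝ) : ℝ := ∫ x, |x| ^ q ∂μ

/-- The `u`-th quantile `ξ_u = F⁻¹(u)`. -/
def quantileF (μ : Measure ℝ) (u : ℝ) : ℝ := sInf {y | u ≤ cdfF μ y}

/-- The quantile estimator `ξ̂_u(h) = sup{y : F̂_W(y|h) ≤ u}`. -/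
def xiHatD (fδ KFt : ℝ → ℝ) (h : ℝ) {n : ℕ} (X : Fin n → ℝ) (u : ℝ) : ℝ :=
  sSup {y | FhatD fδ KFt h X y ≤ u}

/-- The class `𝒢_u^*(C, g)` of target distributions, regular near the `u`-th quantile. -/
def memGstar (u : ℝ) (g : ℝ → ℝ) (C : ℝ) (μ : Measure ℝ) : Prop :=
  ∃ fW : ℝ → ℝ, Measurable fW ∧ (∀ x, 0 ≤ fW x) ∧
    μ = volume.withDensity (fun x => ENNReal.ofReal (fW x)) ∧
    (∀ x ∈ Set.Icc (quantileF μ u - C⁻¹) (quantileF μ u + C⁻¹), 0 < fW x) ∧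
    fW (quantileF μ u) + (fW (quantileF μ u))⁻¹ ≤ C ∧
    ∀ η ∈ Set.Icc (0 : ℝ) 1, ∀ x ∈ Set.Icc (quantileF μ u - C⁻¹) (quantileF μ u + C⁻¹),
      ∀ y ∈ Set.Icc (quantileF μ u - C⁻¹) (quantileF μ u + C⁻¹),
        |x - y| ≤ η → |fW x - fW y| ≤ g η

/-- The class `𝒢₇(β, C, u, g) = 𝒢₃(β, C) ∩ 𝒢_u^*(C, g)`. -/
def memG7 (β C u : ℝ) (g : ℝ → ℝ) (μ : Measure ℝ) : Prop :=
  memG3 β C μ ∧ memGstar u g C μ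

/-- The class `𝒢₈(β, C, u, g)`: members of `𝒢₄(β, C) ∩ 𝒢_u^*(C, g)` with `|ξ_u| > C⁻¹`. -/
def memG8 (β C u : ℝ) (g : ℝ → ℝ) (μ : Measure ℝ) : Prop :=
  memG4 β C μ ∧ memGstar u g C μ ∧ C⁻¹ < |quantileF μ u|

/-! ### Plancherel -/

open FourierTransform in
/-- Plancherel's theorem for the integral Fourier transform of a function in `L¹ ∩ L²`. The abstract
`L²` Fourier transform agrees almost everywhere with the integral one because both define the same
tempered distribution. -/
lemma lintegral_fourier_sq (f : ℝ → ℂ) (hf1 : Integrable f) (hf2 : MemLp f 2) :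
    ∫⁻ ξ, ‖𝓕 f ξ‖ₑ ^ 2 = ∫⁻ x, ‖f x‖ₑ ^ 2 := by
  set F : Lp ℂ 2 (volume : Measure ℝ) := hf2.toLp f with hF
  have hFf : (F : ℝ → ℂ) =ᵐ[volume] f := hf2.coeFn_toLp
  have hcont : Continuous (𝓕 f) := by
    exact VectorFourier.fourierIntegral_continuous Real.continuous_fourierChar
      (innerSL ℝ).continuous₂ hf1
  have key : ∀ᵐ x, (𝓕 F : Lp ℂ 2 (volume : Measure ℝ)) x = 𝓕 f x := by
    -- test both functions against smooth compactly supported `g`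
    refine ae_eq_of_integral_contDiff_smul_eq ?_ hcont.locallyIntegrable ?_
    · exact (Lp.memLp _).locallyIntegrable (by norm_num)
    · intro g hg hgc
      have hgc' : HasCompactSupport (fun x => (g x : ℂ)) := hgc.comp_left Complex.ofReal_zero
      have hg' : ContDiff ℝ (⊤ : ℕ∞) (fun x => (g x : ℂ)) := Complex.ofRealCLM.contDiff.comp hg
      set φ := hgc'.toSchwartzMap hg' with hφ
      have h1 := congrArg (fun T => T φ) (Lp.fourier_toTemperedDistribution_eq F)
      simp only [TemperedDistribution.fourier_apply, Lp.toTemperedDistribution_apply] at h1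
      have h2 : ∫ x, (𝓕 f x) • φ x = ∫ x, f x • (𝓕 (φ : ℝ → ℂ)) x := by
        have := VectorFourier.integral_fourierIntegral_smul_eq_flip (μ := volume) (ν := volume)
          (L := innerₗ ℝ) (f := f) (g := φ) Real.continuous_fourierChar
          (innerSL ℝ).continuous₂ hf1 φ.integrable
        rw [flip_innerₗ] at this
        exact this
      have h3 : ∀ x, φ x = (g x : ℂ) := fun x => rfl
      calc ∫ x, g x • (𝓕 F : Lp ℂ 2 (volume : Measure ℝ)) x
          = ∫ x, φ x • (𝓕 F : Lp ℂ 2 (volume : Measure ℝ)) x := by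
            simp [h3]
        _ = ∫ x, (𝓕 φ) x • F x := h1.symm
        _ = ∫ x, f x • (𝓕 (φ : ℝ → ℂ)) x := by
            refine integral_congr_ae ?_
            filter_upwards [hFf] with x hx
            rw [hx, SchwartzMap.fourier_coe]
            simp [mul_comm]
        _ = ∫ x, g x • 𝓕 f x := by
            rw [← h2]; simp [h3, mul_comm]
  have hn : ‖(𝓕 F : Lp ℂ 2 (volume : Measure ℝ))‖ₑ = ‖F‖ₑ := by
    rw [enorm_eq_iff_norm_eq]; exact Lp.norm_fourier_eq F
  rw [Lp.enorm_def, Lp.enorm_def, eLpNorm_congr_ae key, eLpNorm_congr_ae hFf] at hn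
  rw [eLpNorm_eq_lintegral_rpow_enorm_toReal (by norm_num) (by norm_num),
    eLpNorm_eq_lintegral_rpow_enorm_toReal (by norm_num) (by norm_num)] at hn
  simp only [ENNReal.toReal_ofNat, ENNReal.rpow_ofNat] at hn
  exact (ENNReal.rpow_left_injective (by norm_num : (1 / 2 : ℝ) ≠ 0)) hn

/-! ### Gaussian-regularised Dirichlet integrals -/

/-- The Gaussian damping factor `exp(−t²/(4m²))`, which increases to `1` as `m → ∞`. -/
def gdamp (m t : ℝ) : ℝ := Real.exp (-(4 * m ^ 2)⁻¹ * t ^ 2)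

lemma gdamp_integrable {m : ℝ} (hm : 0 < m) : Integrable (gdamp m) :=
  integrable_exp_neg_mul_sq (by positivity)

lemma gdamp_pos (m t : ℝ) : 0 < gdamp m t := Real.exp_pos _

lemma gdamp_le_one (m t : ℝ) : gdamp m t ≤ 1 := by
  unfold gdamp
  rw [Real.exp_le_one_iff]
  have : 0 ≤ (4 * m ^ 2)⁻¹ * t ^ 2 := by positivity
  linarith

lemma gdamp_measurable (m : ℝ) : Measurable (gdamp m) := by
  unfold gdamp; fun_prop

lemma gdamp_neg (m t : ℝ) : gdamp m (-t) = gdamp m t := by simp [gdamp]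

lemma gdamp_tendsto (t : ℝ) :
    Tendsto (fun n : ℕ => gdamp ((n : ℝ) + 1) t) atTop (𝓝 1) := by
  have h0 : Tendsto (fun n : ℕ => ((n : ℝ) + 1)⁻¹) atTop (𝓝 0) := by
    simpa using tendsto_one_div_add_atTop_nhds_zero_nat (𝕜 := ℝ)
  have h1 : Tendsto (fun n : ℕ => Real.exp (-(4⁻¹ * (((n : ℝ) + 1)⁻¹) ^ 2) * t ^ 2)) atTop
      (𝓝 (Real.exp (-(4⁻¹ * (0 : ℝ) ^ 2) * t ^ 2))) := by
    refine (Real.continuous_exp.tendsto _).comp ?_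
    exact (((h0.pow 2).const_mul _).neg.mul_const _)
  simp only [ne_eq, OfNat.ofNat_ne_zero, not_false_eq_true, zero_pow, mul_zero, neg_zero, zero_mul,
    Real.exp_zero] at h1
  refine h1.congr fun n => ?_
  simp only [gdamp, mul_inv, inv_pow]

lemma integral_cos_gauss {b : ℝ} (hb : 0 < b) (s : ℝ) :
    ∫ t : ℝ, (Complex.exp (Complex.I * (t * s)) * Real.exp (-b * t ^ 2) : ℂ) =
      ((√(Real.pi / b) * Real.exp (-s ^ 2 / (4 * b)) : ℝ) : ℂ) := by
  have h := fourierIntegral_gaussian (b := (b : ℂ)) (by simpa using hb) (s : ℂ)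
  rw [← integral_congr_ae (Eventually.of_forall fun t : ℝ => ?_), h]
  · push_cast
    congr 1
    rw [Real.sqrt_eq_rpow, Complex.ofReal_cpow (by positivity)]
    push_cast; rfl
  · push_cast
    congr 2; ring

lemma integral_cos_gdamp {m : ℝ} (hm : 0 < m) (s : ℝ) :
    ∫ t : ℝ, Real.cos (t * s) * gdamp m t = 2 * √Real.pi * (m * Real.exp (-(s * m) ^ 2)) := by
  have h := congrArg Complex.re (integral_cos_gauss (b := (4 * m ^ 2)⁻¹) (by positivity) s)
  rw [Complex.ofReal_re] at h
  have hi : Integrable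
      (fun t : ℝ => (Complex.exp (Complex.I * (t * s)) * Real.exp (-(4 * m ^ 2)⁻¹ * t ^ 2) : ℂ)) := by
    refine (gdamp_integrable hm).mono' (by fun_prop) (Eventually.of_forall fun t => ?_)
    rw [norm_mul, ← Complex.ofReal_mul, Complex.norm_exp_I_mul_ofReal, one_mul, Complex.norm_real,
      Real.norm_of_nonneg (Real.exp_pos _).le, gdamp]
  have h2 := integral_re hi
  simp only [RCLike.re_to_complex] at h2
  rw [← h2] at h
  convert h using 1
  · refine integral_congr_ae (Eventually.of_forall fun t => ?_)
    beta_reduce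
    rw [Complex.re_mul_ofReal, ← Complex.ofReal_mul, mul_comm Complex.I, Complex.exp_ofReal_mul_I_re]
    rfl
  · have : Real.pi / (4 * m ^ 2)⁻¹ = Real.pi * (2 * m) ^ 2 := by field_simp; ring
    rw [this, Real.sqrt_mul Real.pi_pos.le, Real.sqrt_sq (by positivity)]
    have : -s ^ 2 / (4 * (4 * m ^ 2)⁻¹) = -(s * m) ^ 2 := by field_simp
    rw [this]; ring

lemma abs_sin_div_le (t u : ℝ) : |Real.sin (t * u) / t| ≤ |u| := by
  rcases eq_or_ne t 0 with rfl | ht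
  · simp
  rw [abs_div, div_le_iff₀ (abs_pos.2 ht), ← abs_mul, mul_comm u t]
  exact Real.abs_sin_le_abs

lemma sin_div_integrable {g : ℝ → ℝ} (hg : Integrable g) (u : ℝ) :
    Integrable fun t => Real.sin (t * u) / t * g t := by
  refine (hg.norm.const_mul |u|).mono' ?_ (Eventually.of_forall fun t => ?_)
  · exact AEStronglyMeasurable.mul (Measurable.aestronglyMeasurable (by fun_prop)) hg.1
  · rw [norm_mul]
    exact mul_le_mul_of_nonneg_right (abs_sin_div_le t u) (norm_nonneg _)

/-- The damped Dirichlet integral is an error function: write `sin(tu)/t` as `∫₀ᵘ cos(ts) ds` and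
exchange the integrals. -/
lemma integral_sin_gdamp {m : ℝ} (hm : 0 < m) (u : ℝ) :
    ∫ t : ℝ, Real.sin (t * u) / t * gdamp m t =
      2 * √Real.pi * ∫ v in (0 : ℝ)..(u * m), Real.exp (-v ^ 2) := by
  have h1 : ∫ t : ℝ, Real.sin (t * u) / t * gdamp m t =
      ∫ t : ℝ, ∫ s in (0 : ℝ)..u, Real.cos (t * s) * gdamp m t := by
    refine integral_congr_ae ?_
    filter_upwards [(measure_eq_zero_iff_ae_notMem.1 (measure_singleton (0 : ℝ)) :
      ∀ᵐ t : ℝ, t ∉ ({0} : Set ℝ))] with t ht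
    have ht' : t ≠ 0 := ht
    rw [intervalIntegral.integral_mul_const, intervalIntegral.integral_comp_mul_left _ ht']
    simp only [integral_cos, mul_zero, Real.sin_zero, sub_zero, smul_eq_mul]
    rw [div_eq_inv_mul]
  have h2 : ∫ t : ℝ, ∫ s in (0 : ℝ)..u, Real.cos (t * s) * gdamp m t =
      ∫ s in (0 : ℝ)..u, ∫ t : ℝ, Real.cos (t * s) * gdamp m t := by
    symm
    refine intervalIntegral_integral_swap ?_
    have : Integrable (fun p : ℝ × ℝ => gdamp m p.2)
        ((volume.restrict (Set.uIoc 0 u)).prod volume) := by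
      have : IsFiniteMeasure ((volume : Measure ℝ).restrict (Set.uIoc 0 u)) := by
        rw [Set.uIoc]; infer_instance
      exact (gdamp_integrable hm).comp_snd _
    refine this.mono ?_ (Eventually.of_forall fun p => ?_)
    · have := gdamp_measurable m
      exact Measurable.aestronglyMeasurable (by simp only [Function.uncurry_def]; fun_prop)
    · simp only [Function.uncurry_def, norm_mul]
      exact mul_le_of_le_one_left (norm_nonneg _) (Real.abs_cos_le_one _)
  rw [h1, h2]
  simp_rw [integral_cos_gdamp hm]
  rw [intervalIntegral.integral_const_mul, intervalIntegral.integral_const_mul,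
    intervalIntegral.mul_integral_comp_mul_right (f := fun v => Real.exp (-v ^ 2))]
  simp

lemma integrable_exp_neg_sq : Integrable fun v : ℝ => Real.exp (-v ^ 2) := by
  simpa using integrable_exp_neg_mul_sq (b := 1) one_pos

lemma abs_integral_sin_gdamp_le {m : ℝ} (hm : 0 < m) (u : ℝ) :
    |∫ t : ℝ, Real.sin (t * u) / t * gdamp m t| ≤ 2 * Real.pi := by
  rw [integral_sin_gdamp hm, abs_mul, abs_of_pos (by positivity)]
  have h1 : |∫ v in (0 : ℝ)..(u * m), Real.exp (-v ^ 2)| ≤ √Real.pi := by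
    have := intervalIntegral.norm_integral_le_integral_norm_uIoc (f := fun v : ℝ => Real.exp (-v ^ 2))
      (a := 0) (b := u * m) (μ := volume)
    refine this.trans ?_
    have h2 : ∫ v : ℝ, Real.exp (-v ^ 2) = √Real.pi := by
      simpa using integral_gaussian 1
    rw [← h2]
    simp only [Real.norm_of_nonneg (Real.exp_pos _).le]
    exact setIntegral_le_integral integrable_exp_neg_sq
      (Eventually.of_forall fun v => (Real.exp_pos _).le)
  calc 2 * √Real.pi * |∫ v in (0 : ℝ)..(u * m), Real.exp (-v ^ 2)| ≤ 2 * √Real.pi * √Real.pi := by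
        gcongr
    _ = 2 * Real.pi := by rw [mul_assoc, Real.mul_self_sqrt Real.pi_pos.le]

/-- The Dirichlet integral `∫ sin(tu)/t dt = π sign(u)` in Gaussian-regularised form. -/
lemma tendsto_integral_sin_gdamp (u : ℝ) :
    Tendsto (fun n : ℕ => ∫ t : ℝ, Real.sin (t * u) / t * gdamp ((n : ℝ) + 1) t) atTop
      (𝓝 (Real.pi * Real.sign u)) := by
  have hpos : ∀ u : ℝ, 0 < u →
      Tendsto (fun n : ℕ => ∫ t : ℝ, Real.sin (t * u) / t * gdamp ((n : ℝ) + 1) t) atTop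
      (𝓝 Real.pi) := by
    intro u hu
    have h1 : Tendsto (fun n : ℕ => u * ((n : ℝ) + 1)) atTop atTop :=
      (tendsto_atTop_add_const_right _ _ tendsto_natCast_atTop_atTop).const_mul_atTop hu
    have h2 := intervalIntegral_tendsto_integral_Ioi (μ := volume) 0
      integrable_exp_neg_sq.integrableOn h1
    have h3 : ∫ v in Set.Ioi (0 : ℝ), Real.exp (-v ^ 2) = √Real.pi / 2 := by
      simpa using integral_gaussian_Ioi 1
    rw [h3] at h2
    have h4 := h2.const_mul (2 * √Real.pi)
    have h5 : 2 * √Real.pi * (√Real.pi / 2) = Real.pi := by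
      have := Real.mul_self_sqrt Real.pi_pos.le
      linarith
    rw [h5] at h4
    exact h4.congr fun n => (integral_sin_gdamp (by positivity) u).symm
  rcases lt_trichotomy u 0 with hu | rfl | hu
  · rw [Real.sign_of_neg hu, mul_neg_one]
    refine (hpos (-u) (by linarith)).neg.congr fun n => ?_
    rw [← integral_neg]
    refine integral_congr_ae (Eventually.of_forall fun t => ?_)
    simp [neg_div]
  · simp
  · rw [Real.sign_of_pos hu, mul_one]
    exact hpos u hu

/-! ### Deviation of the inversion integral from the Heaviside function -/

/-- The inversion integral `(2π)⁻¹ ∫ sin(tu)/t k(t) dt`, so that `L₁(u|h) = 1/2 + Sint k u` with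
`k(t) = K^Ft(ht)/f_δ(t)`. At `t = 0` the quotient takes the value `0`, on a null set. -/
def Sint (k : ℝ → ℝ) (u : ℝ) : ℝ := (2 * Real.pi)⁻¹ * ∫ t : ℝ, Real.sin (t * u) / t * k t

/-- Deviation of `1/2 + Sint k u` from the Heaviside function `1/2 + sign(u)/2`. -/
def Adev (k : ℝ → ℝ) (u : ℝ) : ℝ := Sint k u - Real.sign u / 2

/-- Gaussian-damped version of `Adev k`: formally `Adev k u = (2π)⁻¹ ∫ sin(tu) (k(t) − 1)/t dt`, and
here the integrand carries the factor `gdamp m`. -/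
def Adamp (k : ℝ → ℝ) (m u : ℝ) : ℝ :=
  (2 * Real.pi)⁻¹ * ∫ t : ℝ, Real.sin (t * u) * ((k t - 1) / t * gdamp m t)

lemma measurable_real_sign : Measurable Real.sign := by
  unfold Real.sign
  exact Measurable.ite measurableSet_Iio measurable_const
    (Measurable.ite measurableSet_Ioi measurable_const measurable_const)

lemma measurable_Sint {k : ℝ → ℝ} (hk : Measurable k) : Measurable (Sint k) := by
  unfold Sint
  refine Measurable.const_mul ?_ _
  refine (StronglyMeasurable.integral_prod_right (f := fun u t : ℝ => Real.sin (t * u) / t * k t)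
    ?_).measurable
  exact Measurable.stronglyMeasurable (by simp only [Function.uncurry_def]; fun_prop)

lemma measurable_Adev {k : ℝ → ℝ} (hk : Measurable k) : Measurable (Adev k) :=
  (measurable_Sint hk).sub (measurable_real_sign.div_const 2)

lemma measurable_Adamp {k : ℝ → ℝ} (hk : Measurable k) (m : ℝ) : Measurable (Adamp k m) := by
  unfold Adamp
  refine Measurable.const_mul ?_ _
  refine (StronglyMeasurable.integral_prod_right
    (f := fun u t : ℝ => Real.sin (t * u) * ((k t - 1) / t * gdamp m t)) ?_).measurable
  have := gdamp_measurable m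
  exact Measurable.stronglyMeasurable (by simp only [Function.uncurry_def]; fun_prop)

lemma integrable_mul_gdamp {k : ℝ → ℝ} (hki : Integrable k) (m : ℝ) :
    Integrable fun t => k t * gdamp m t := by
  refine hki.mono (hki.1.mul (gdamp_measurable m).aestronglyMeasurable)
    (Eventually.of_forall fun t => ?_)
  rw [norm_mul, Real.norm_of_nonneg (gdamp_pos m t).le]
  exact mul_le_of_le_one_right (norm_nonneg _) (gdamp_le_one m t)

lemma Adamp_eq {k : ℝ → ℝ} (hki : Integrable k) {m : ℝ} (hm : 0 < m) (u : ℝ) :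
    Adamp k m u = (2 * Real.pi)⁻¹ * ((∫ t : ℝ, Real.sin (t * u) / t * (k t * gdamp m t)) -
      ∫ t : ℝ, Real.sin (t * u) / t * gdamp m t) := by
  rw [Adamp, ← integral_sub (sin_div_integrable (integrable_mul_gdamp hki m) u)
    (sin_div_integrable (gdamp_integrable hm) u)]
  congr 2
  funext t
  ring

lemma abs_integral_sin_div_le {g : ℝ → ℝ} (hg : Integrable g) (u : ℝ) :
    |∫ t : ℝ, Real.sin (t * u) / t * g t| ≤ |u| * ∫ t, |g t| := by
  rw [← integral_const_mul, ← Real.norm_eq_abs]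
  refine norm_integral_le_of_norm_le (hg.norm.const_mul _) (Eventually.of_forall fun t => ?_)
  rw [norm_mul]
  exact mul_le_mul_of_nonneg_right (abs_sin_div_le t u) (norm_nonneg _)

lemma abs_Adamp_le {k : ℝ → ℝ} (hki : Integrable k) {m : ℝ} (hm : 0 < m) (u : ℝ) :
    |Adamp k m u| ≤ (2 * Real.pi)⁻¹ * (|u| * (∫ t, |k t|) + 2 * Real.pi) := by
  rw [Adamp_eq hki hm, abs_mul, abs_of_pos (by positivity : 0 < (2 * Real.pi)⁻¹)]
  gcongr
  refine (abs_sub _ _).trans (add_le_add ?_ (abs_integral_sin_gdamp_le hm u))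
  refine (abs_integral_sin_div_le (integrable_mul_gdamp hki m) u).trans ?_
  gcongr ?_ * ?_
  refine integral_mono (integrable_mul_gdamp hki m).norm hki.norm fun t => ?_
  simp only [abs_mul, abs_of_pos (gdamp_pos m t)]
  exact mul_le_of_le_one_right (abs_nonneg _) (gdamp_le_one m t)

lemma tendsto_Adamp {k : ℝ → ℝ} (hki : Integrable k) (u : ℝ) :
    Tendsto (fun n : ℕ => Adamp k ((n : ℝ) + 1) u) atTop (𝓝 (Adev k u)) := by
  have h1 : Tendsto (fun n : ℕ => ∫ t : ℝ, Real.sin (t * u) / t * (k t * gdamp ((n : ℝ) + 1) t))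
      atTop (𝓝 (∫ t : ℝ, Real.sin (t * u) / t * k t)) := by
    refine tendsto_integral_of_dominated_convergence
      (fun t => ‖Real.sin (t * u) / t * k t‖) ?_ (sin_div_integrable hki u).norm ?_ ?_
    · exact fun n => (sin_div_integrable (integrable_mul_gdamp hki _) u).1
    · refine fun n => Eventually.of_forall fun t => ?_
      rw [← mul_assoc, norm_mul _ (gdamp _ t), Real.norm_of_nonneg (gdamp_pos _ t).le]
      exact mul_le_of_le_one_right (norm_nonneg _) (gdamp_le_one _ t)
    · refine Eventually.of_forall fun t => ?_
      simpa using ((gdamp_tendsto t).const_mul (k t)).const_mul (Real.sin (t * u) / t)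
  have h2 := (h1.sub (tendsto_integral_sin_gdamp u)).const_mul (2 * Real.pi)⁻¹
  have h3 : (2 * Real.pi)⁻¹ * ((∫ t : ℝ, Real.sin (t * u) / t * k t) - Real.pi * Real.sign u) =
      Adev k u := by
    have := Real.pi_pos.ne'
    rw [Adev, Sint, mul_sub]
    congr 1
    field_simp
  rw [h3] at h2
  exact h2.congr fun n => (Adamp_eq hki (by positivity) u).symm

lemma charFn_eq_charFun (μ : Measure ℝ) (t : ℝ) : charFn μ t = charFun μ t := by
  rw [charFn, charFun_apply_real]
  simp_rw [mul_comm Complex.I]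

lemma measurable_charFn (μ : Measure ℝ) [IsProbabilityMeasure μ] : Measurable (charFn μ) := by
  have : charFn μ = charFun μ := funext (charFn_eq_charFun μ)
  rw [this]; exact measurable_charFun

lemma norm_charFn_le_one (μ : Measure ℝ) [IsProbabilityMeasure μ] (t : ℝ) : ‖charFn μ t‖ ≤ 1 := by
  rw [charFn_eq_charFun]; exact norm_charFun_le_one t

lemma integrable_Adamp_comp {k : ℝ → ℝ} (hk : Measurable k) (hki : Integrable k)
    {μ : Measure ℝ} [IsProbabilityMeasure μ] (hμ : Integrable (fun w => w) μ)
    {m : ℝ} (hm : 0 < m) (x : ℝ) : Integrable (fun w => Adamp k m (x - w)) μ := by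
  have h1 : Integrable
      (fun w => (2 * Real.pi)⁻¹ * (|x - w| * (∫ t, |k t|) + 2 * Real.pi)) μ :=
    ((((integrable_const x).sub hμ).abs.mul_const _).add (integrable_const _)).const_mul _
  refine h1.mono' ?_ (Eventually.of_forall fun w => abs_Adamp_le hki hm _)
  exact ((measurable_Adamp hk m).comp (by fun_prop)).aestronglyMeasurable

lemma tendsto_integral_Adamp {k : ℝ → ℝ} (hk : Measurable k) (hki : Integrable k)
    {μ : Measure ℝ} [IsProbabilityMeasure μ] (hμ : Integrable (fun w => w) μ) (x : ℝ) :
    Tendsto (fun n : ℕ => ∫ w, Adamp k ((n : ℝ) + 1) (x - w) ∂μ) atTop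
      (𝓝 (∫ w, Adev k (x - w) ∂μ)) := by
  refine tendsto_integral_of_dominated_convergence
    (fun w => (2 * Real.pi)⁻¹ * (|x - w| * (∫ t, |k t|) + 2 * Real.pi)) ?_ ?_ ?_ ?_
  · exact fun n => (integrable_Adamp_comp hk hki hμ (by positivity) x).1
  · exact ((((integrable_const x).sub hμ).abs.mul_const _).add (integrable_const _)).const_mul _
  · exact fun n => Eventually.of_forall fun w => abs_Adamp_le hki (by positivity) _
  · exact Eventually.of_forall fun w => tendsto_Adamp hki _

/-- The Gaussian-damped frequency profile `(k(t) − 1)/t · exp(−t²/(4m²))`. -/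
def qd (k : ℝ → ℝ) (m t : ℝ) : ℝ := (k t - 1) / t * gdamp m t

lemma measurable_qd {k : ℝ → ℝ} (hk : Measurable k) (m : ℝ) : Measurable (qd k m) := by
  have := gdamp_measurable m
  unfold qd; fun_prop

lemma abs_qd_le {k : ℝ → ℝ} {c : ℝ} (hkc : ∀ t, |k t - 1| ≤ c * |t|) (m t : ℝ) :
    |qd k m t| ≤ c * gdamp m t := by
  rw [qd, abs_mul, abs_of_pos (gdamp_pos m t)]
  refine mul_le_mul_of_nonneg_right ?_ (gdamp_pos m t).le
  rcases eq_or_ne t 0 with rfl | ht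
  · have := (abs_nonneg _).trans (hkc 1)
    simpa using this
  · rw [abs_div, div_le_iff₀ (abs_pos.2 ht)]
    exact hkc t

lemma integrable_qd {k : ℝ → ℝ} (hk : Measurable k) {c : ℝ} (hkc : ∀ t, |k t - 1| ≤ c * |t|)
    {m : ℝ} (hm : 0 < m) : Integrable (qd k m) :=
  ((gdamp_integrable hm).const_mul c).mono' (measurable_qd hk m).aestronglyMeasurable
    (Eventually.of_forall fun t => abs_qd_le hkc m t)

/-- The damped profile is odd, so only the sine part of its Fourier transform survives. -/
lemma integral_exp_qd {k : ℝ → ℝ} (hk : Measurable k) (hke : ∀ t, k (-t) = k t)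
    {c : ℝ} (hkc : ∀ t, |k t - 1| ≤ c * |t|) {m : ℝ} (hm : 0 < m) (u : ℝ) :
    ∫ t : ℝ, Complex.exp (-(Complex.I * (t * u))) * (qd k m t : ℂ) =
      -Complex.I * ((∫ t : ℝ, Real.sin (t * u) * qd k m t : ℝ) : ℂ) := by
  have hq := integrable_qd hk hkc hm
  have hcos : ∫ t : ℝ, Real.cos (t * u) * qd k m t = 0 := by
    have h := integral_neg_eq_self (fun t : ℝ => Real.cos (t * u) * qd k m t) volume
    have h2 : ∀ t, Real.cos (-t * u) * qd k m (-t) = -(Real.cos (t * u) * qd k m t) := by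
      intro t
      rw [neg_mul, Real.cos_neg, qd, qd, hke, gdamp_neg]
      ring
    simp only [h2, integral_neg] at h
    linarith
  have hi1 : Integrable fun t : ℝ => ((Real.cos (t * u) * qd k m t : ℝ) : ℂ) := by
    refine Integrable.ofReal (f := fun t => Real.cos (t * u) * qd k m t)
      (hq.mono ?_ (Eventually.of_forall fun t => ?_))
    · exact AEStronglyMeasurable.mul (Measurable.aestronglyMeasurable (by fun_prop)) hq.1
    · rw [norm_mul]
      exact mul_le_of_le_one_left (norm_nonneg _) (Real.abs_cos_le_one _)
  have hi2 : Integrable fun t : ℝ => -Complex.I * ((Real.sin (t * u) * qd k m t : ℝ) : ℂ) := by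
    refine (Integrable.ofReal (f := fun t => Real.sin (t * u) * qd k m t)
      (hq.mono ?_ (Eventually.of_forall fun t => ?_))).const_mul _
    · exact AEStronglyMeasurable.mul (Measurable.aestronglyMeasurable (by fun_prop)) hq.1
    · rw [norm_mul]
      exact mul_le_of_le_one_left (norm_nonneg _) (Real.abs_sin_le_one _)
  have h1 : ∀ t : ℝ, Complex.exp (-(Complex.I * (t * u))) * (qd k m t : ℂ) =
      ((Real.cos (t * u) * qd k m t : ℝ) : ℂ) +
        -Complex.I * ((Real.sin (t * u) * qd k m t : ℝ) : ℂ) := by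
    intro t
    rw [mul_comm Complex.I, ← neg_mul, Complex.exp_mul_I, Complex.cos_neg, Complex.sin_neg]
    push_cast
    ring
  simp_rw [h1]
  rw [integral_add hi1 hi2, integral_const_mul, integral_complex_ofReal, integral_complex_ofReal,
    hcos]
  simp

open FourierTransform in
lemma integral_Adamp_eq_fourier {k : ℝ → ℝ} (hk : Measurable k) (hke : ∀ t, k (-t) = k t)
    {c : ℝ} (hkc : ∀ t, |k t - 1| ≤ c * |t|)
    (μ : Measure ℝ) [IsProbabilityMeasure μ] {m : ℝ} (hm : 0 < m) (x : ℝ) :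
    ((∫ w, Adamp k m (x - w) ∂μ : ℝ) : ℂ) = Complex.I *
      𝓕 (fun v : ℝ => (qd k m (2 * Real.pi * v) : ℂ) * charFn μ (2 * Real.pi * v)) x := by
  have hq := integrable_qd hk hkc hm
  rw [Real.fourier_real_eq_integral_exp_smul]
  have h1 := Measure.integral_comp_mul_left (fun t : ℝ =>
    Complex.exp (-(Complex.I * (t * x))) * ((qd k m t : ℂ) * charFn μ t)) (2 * Real.pi)
  have h2 : ∀ v : ℝ, Complex.exp (((-2 * Real.pi * v * x : ℝ) : ℂ) * Complex.I) •
      ((qd k m (2 * Real.pi * v) : ℂ) * charFn μ (2 * Real.pi * v)) =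
      Complex.exp (-(Complex.I * ((2 * Real.pi * v : ℝ) * x))) *
        ((qd k m (2 * Real.pi * v) : ℂ) * charFn μ (2 * Real.pi * v)) := by
    intro v
    rw [smul_eq_mul]
    congr 2
    push_cast; ring
  simp_rw [h2]
  rw [h1, abs_of_pos (by positivity)]
  have h3 : ∀ t : ℝ, Complex.exp (-(Complex.I * (t * x))) * ((qd k m t : ℂ) * charFn μ t) =
      ∫ w, Complex.exp (-(Complex.I * (t * ((x - w : ℝ) : ℂ)))) * (qd k m t : ℂ) ∂μ := by
    intro t
    rw [charFn, mul_comm (qd k m t : ℂ), ← mul_assoc, ← integral_const_mul, ← integral_mul_const]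
    congr 1
    funext w
    rw [← Complex.exp_add]
    congr 2
    push_cast; ring
  simp_rw [h3]
  rw [integral_integral_swap]
  · simp_rw [integral_exp_qd hk hke hkc hm]
    rw [integral_const_mul, integral_complex_ofReal, Complex.real_smul]
    have : ∀ w, Adamp k m (x - w) =
      (2 * Real.pi)⁻¹ * ∫ t : ℝ, Real.sin (t * (x - w)) * qd k m t := fun w => rfl
    simp_rw [this, integral_const_mul]
    push_cast
    linear_combination ((2 * Real.pi)⁻¹ *
      ((∫ w, (∫ t : ℝ, Real.sin (t * (x - w)) * qd k m t) ∂μ : ℝ) : ℂ)) * Complex.I_sq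
  · have : Integrable (fun p : ℝ × ℝ => qd k m p.1) (volume.prod μ) := hq.comp_fst μ
    refine this.mono ?_ (Eventually.of_forall fun p => ?_)
    · have := measurable_qd hk m
      exact Measurable.aestronglyMeasurable (by simp only [Function.uncurry_def]; fun_prop)
    · simp only [Function.uncurry_def]
      rw [norm_mul, ← Complex.ofReal_mul, mul_comm Complex.I, ← neg_mul, ← Complex.ofReal_neg,
        Complex.norm_exp_ofReal_mul_I, one_mul, Complex.norm_real]

lemma lintegral_comp_mul_left_real {f : ℝ → ℝ≥0∞} (hf : Measurable f) {a : ℝ} (ha : 0 < a) :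
    ∫⁻ t, f (a * t) = ENNReal.ofReal a⁻¹ * ∫⁻ t, f t := by
  rw [← lintegral_map hf (measurable_const_mul a), Real.map_volume_mul_left ha.ne',
    lintegral_smul_measure, abs_of_pos (inv_pos.2 ha), smul_eq_mul]

lemma enorm_sq_eq_ofReal {E : Type*} [NormedAddCommGroup E] (z : E) :
    ‖z‖ₑ ^ 2 = ENNReal.ofReal (‖z‖ ^ 2) := by
  rw [ENNReal.ofReal_pow (norm_nonneg _), ofReal_norm]

/-- Plancherel bound for the averaged deviation. Equality holds up to the factor `(2π)⁻¹`, which is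
discarded. -/
theorem lintegral_dev_sq_le {k : ℝ → ℝ} (hk : Measurable k) (hke : ∀ t, k (-t) = k t)
    (hki : Integrable k) {c : ℝ} (hkc : ∀ t, |k t - 1| ≤ c * |t|)
    (μ : Measure ℝ) [IsProbabilityMeasure μ] (hμ : Integrable (fun w => w) μ) :
    ∫⁻ x, ENNReal.ofReal ((∫ w, Adev k (x - w) ∂μ) ^ 2) ≤
      ∫⁻ t, ENNReal.ofReal (((k t - 1) / t) ^ 2 * ‖charFn μ t‖ ^ 2) := by
  have hφ := measurable_charFn μ
  have hmeas : ∀ m, Measurable fun x => ∫ w, Adamp k m (x - w) ∂μ := by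
    intro m
    refine (StronglyMeasurable.integral_prod_right
      (f := fun x w : ℝ => Adamp k m (x - w)) ?_).measurable
    have := measurable_Adamp hk m
    exact Measurable.stronglyMeasurable (by simp only [Function.uncurry_def]; fun_prop)
  have hbound : ∀ m : ℝ, 0 < m → ∫⁻ x, ENNReal.ofReal ((∫ w, Adamp k m (x - w) ∂μ) ^ 2) ≤
      ∫⁻ t, ENNReal.ofReal (((k t - 1) / t) ^ 2 * ‖charFn μ t‖ ^ 2) := by
    intro m hm
    have hqm := measurable_qd hk m
    set p : ℝ → ℂ := fun v => (qd k m (2 * Real.pi * v) : ℂ) * charFn μ (2 * Real.pi * v) with hp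
    have hpm : Measurable p := by rw [hp]; fun_prop
    have hqi : Integrable (fun v => qd k m (2 * Real.pi * v)) :=
      (integrable_qd hk hkc hm).comp_mul_left' (by positivity)
    have hple : ∀ v, ‖p v‖ ≤ ‖qd k m (2 * Real.pi * v)‖ := by
      intro v
      rw [hp]
      simp only [norm_mul, Complex.norm_real]
      exact mul_le_of_le_one_right (norm_nonneg _) (norm_charFn_le_one μ _)
    have hp1 : Integrable p :=
      hqi.mono hpm.aestronglyMeasurable (Eventually.of_forall hple)
    have hqc : ∀ t, |qd k m t| ≤ c := by
      intro t
      have hc : 0 ≤ c := by simpa using (abs_nonneg _).trans (hkc 1)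
      exact (abs_qd_le hkc m t).trans (mul_le_of_le_one_right hc (gdamp_le_one m t))
    have hp2 : MemLp p 2 := by
      rw [memLp_two_iff_integrable_sq_norm hpm.aestronglyMeasurable]
      refine (hp1.norm.const_mul c).mono' (by fun_prop) (Eventually.of_forall fun v => ?_)
      rw [Real.norm_of_nonneg (by positivity), sq]
      exact mul_le_mul_of_nonneg_right ((hple v).trans (hqc _)) (norm_nonneg _)
    have h1 := lintegral_fourier_sq p hp1 hp2
    have h2 : ∀ x, ENNReal.ofReal ((∫ w, Adamp k m (x - w) ∂μ) ^ 2) =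
        ‖FourierTransform.fourier p x‖ₑ ^ 2 := by
      intro x
      have h := congrArg norm (integral_Adamp_eq_fourier hk hke hkc μ hm x)
      rw [norm_mul, Complex.norm_I, one_mul, Complex.norm_real] at h
      rw [enorm_sq_eq_ofReal, ← h, Real.norm_eq_abs, sq_abs]
    simp_rw [h2]
    rw [h1]
    have hFm : Measurable fun t => ENNReal.ofReal (((k t - 1) / t) ^ 2 * ‖charFn μ t‖ ^ 2) := by
      fun_prop
    calc ∫⁻ v, ‖p v‖ₑ ^ 2
        ≤ ∫⁻ v, (fun t => ENNReal.ofReal (((k t - 1) / t) ^ 2 * ‖charFn μ t‖ ^ 2))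
            (2 * Real.pi * v) := by
          refine lintegral_mono fun v => ?_
          rw [enorm_sq_eq_ofReal]
          refine ENNReal.ofReal_le_ofReal ?_
          simp only [hp, norm_mul, Complex.norm_real, mul_pow, Real.norm_eq_abs, sq_abs]
          refine mul_le_mul_of_nonneg_right ?_ (sq_nonneg _)
          rw [qd, mul_pow]
          refine mul_le_of_le_one_right (sq_nonneg _) ?_
          exact pow_le_one₀ (gdamp_pos _ _).le (gdamp_le_one _ _)
      _ = ENNReal.ofReal (2 * Real.pi)⁻¹ * _ :=
          lintegral_comp_mul_left_real hFm (by positivity)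
      _ ≤ 1 * ∫⁻ t, ENNReal.ofReal (((k t - 1) / t) ^ 2 * ‖charFn μ t‖ ^ 2) := by
          gcongr
          rw [ENNReal.ofReal_le_one]
          refine inv_le_one_of_one_le₀ ?_
          have := Real.pi_gt_three
          linarith
      _ = _ := one_mul _
  have hlim : ∀ x, liminf (fun n : ℕ =>
      ENNReal.ofReal ((∫ w, Adamp k ((n : ℝ) + 1) (x - w) ∂μ) ^ 2)) atTop =
      ENNReal.ofReal ((∫ w, Adev k (x - w) ∂μ) ^ 2) := by
    intro x
    refine Tendsto.liminf_eq ?_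
    exact (ENNReal.continuous_ofReal.tendsto _).comp ((tendsto_integral_Adamp hk hki hμ x).pow 2)
  calc ∫⁻ x, ENNReal.ofReal ((∫ w, Adev k (x - w) ∂μ) ^ 2)
      = ∫⁻ x, liminf (fun n : ℕ =>
          ENNReal.ofReal ((∫ w, Adamp k ((n : ℝ) + 1) (x - w) ∂μ) ^ 2)) atTop := by
        simp_rw [hlim]
    _ ≤ liminf (fun n : ℕ => ∫⁻ x,
          ENNReal.ofReal ((∫ w, Adamp k ((n : ℝ) + 1) (x - w) ∂μ) ^ 2)) atTop := by
        refine lintegral_liminf_le fun n => ?_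
        exact ((hmeas _).pow_const 2).ennreal_ofReal
    _ ≤ liminf (fun _ : ℕ =>
          ∫⁻ t, ENNReal.ofReal (((k t - 1) / t) ^ 2 * ‖charFn μ t‖ ^ 2)) atTop :=
        liminf_le_liminf (Eventually.of_forall fun n => hbound _ (by positivity))
    _ = _ := liminf_const _

/-! ### Bias and variance of the estimator -/

/-- Bias–variance decomposition for a sample mean, with the variance bounded by the second moment
about an arbitrary centre `c`. If that moment is infinite the right-hand side is `⊤`, since `n⁻¹ ≠ 0`. -/
lemma lintegral_sample_mean_sq_le {ν : Measure ℝ} [IsProbabilityMeasure ν] {Y : ℝ → ℝ}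
    (hY : Measurable Y) (c θ : ℝ) {n : ℕ} (hn : 1 ≤ n) :
    ∫⁻ X : Fin n → ℝ, ENNReal.ofReal (((n : ℝ)⁻¹ * ∑ j, Y (X j) - θ) ^ 2)
        ∂Measure.pi (fun _ => ν) ≤
      (n : ℝ≥0∞)⁻¹ * (∫⁻ y, ENNReal.ofReal ((Y y - c) ^ 2) ∂ν) +
        ENNReal.ofReal ((∫ y, Y y ∂ν - θ) ^ 2) := by
  by_cases hfin : (∫⁻ y, ENNReal.ofReal ((Y y - c) ^ 2) ∂ν) = ⊤
  · rw [hfin, ENNReal.mul_top (by simp)]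
    simp
  have hc2 : MemLp (fun y => Y y - c) 2 ν := by
    rw [memLp_two_iff_integrable_sq (hY.sub_const c).aestronglyMeasurable]
    refine ⟨by fun_prop, ?_⟩
    rw [hasFiniteIntegral_iff_ofReal (Eventually.of_forall fun y => sq_nonneg _)]
    exact lt_top_iff_ne_top.2 hfin
  have hY2 : MemLp Y 2 ν := by
    have h := hc2.add (memLp_const c)
    have e : ((fun y => Y y - c) + fun _ => c) = Y := by funext y; simp
    rwa [e] at h
  set P : Measure (Fin n → ℝ) := Measure.pi (fun _ => ν) with hP
  have hYj : ∀ j : Fin n, MemLp (fun X : Fin n → ℝ => Y (X j)) 2 P := fun j =>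
    hY2.comp_measurePreserving (measurePreserving_eval (fun _ => ν) j)
  set T : (Fin n → ℝ) → ℝ := fun X => (n : ℝ)⁻¹ * ∑ j, Y (X j) with hT
  have hS2 : MemLp (∑ j : Fin n, fun X : Fin n → ℝ => Y (X j)) 2 P :=
    memLp_finsetSum' _ fun j _ => hYj j
  have hTS : T = fun X => (n : ℝ)⁻¹ * (∑ j : Fin n, fun X : Fin n → ℝ => Y (X j)) X := by
    funext X; simp [hT]
  have hT2 : MemLp T 2 P := by rw [hTS]; exact hS2.const_mul _
  have hn0 : (n : ℝ) ≠ 0 := by positivity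
  have hTmean : ∫ X, T X ∂P = ∫ y, Y y ∂ν := by
    rw [hT, integral_const_mul, integral_finsetSum _ fun j _ => (hYj j).integrable one_le_two]
    have : ∀ j : Fin n, ∫ X, Y (X j) ∂P = ∫ y, Y y ∂ν := fun j =>
      integral_comp_eval (μ := fun _ : Fin n => ν) hY.aestronglyMeasurable
    simp [this, hn0]
  have hTvar : ProbabilityTheory.variance T P = (n : ℝ)⁻¹ * ProbabilityTheory.variance Y ν := by
    rw [hTS, ProbabilityTheory.variance_const_mul, hP,
      ProbabilityTheory.variance_sum_pi (X := fun _ => Y) fun _ => hY2]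
    simp
    field_simp
  have hvarle : ProbabilityTheory.variance Y ν ≤ ∫ y, (Y y - c) ^ 2 ∂ν := by
    rw [← ProbabilityTheory.variance_sub_const hY.aestronglyMeasurable c]
    exact ProbabilityTheory.variance_le_expectation_sq (hY.sub_const c).aestronglyMeasurable
  have hTθ : MemLp (fun X => T X - θ) 2 P := hT2.sub (memLp_const θ)
  have hsq : ∫ X, (T X - θ) ^ 2 ∂P =
      ProbabilityTheory.variance T P + (∫ y, Y y ∂ν - θ) ^ 2 := by
    have h := ProbabilityTheory.variance_eq_sub hTθ
    rw [ProbabilityTheory.variance_sub_const hT2.1,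
      integral_sub (hT2.integrable one_le_two) (integrable_const _), hTmean] at h
    simp only [Pi.pow_apply, integral_const, probReal_univ, one_smul] at h
    linarith
  rw [← ofReal_integral_eq_lintegral_ofReal hTθ.integrable_sq
    (Eventually.of_forall fun X => sq_nonneg _), hsq, hTvar,
    ENNReal.ofReal_add (by have := ProbabilityTheory.variance_nonneg Y ν; positivity)
      (sq_nonneg _)]
  gcongr
  rw [ENNReal.ofReal_mul (by positivity), ENNReal.ofReal_inv_of_pos (by positivity),
    ENNReal.ofReal_natCast,
    ← ofReal_integral_eq_lintegral_ofReal hc2.integrable_sq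
      (Eventually.of_forall fun X => sq_nonneg _)]
  gcongr

lemma integrable_of_absMomBdd {μ : Measure ℝ} {C : ℝ} (h : absMomBdd μ 1 C) :
    Integrable (fun x => x) μ := by
  refine ⟨by fun_prop, ?_⟩
  rw [hasFiniteIntegral_iff_norm]
  refine lt_of_le_of_lt ?_ ENNReal.ofReal_lt_top (b := ENNReal.ofReal C)
  simpa [absMomBdd] using h

lemma lintegral_abs_le {μ : Measure ℝ} {C : ℝ} (h : absMomBdd μ 1 C) :
    ∫⁻ x, ENNReal.ofReal |x| ∂μ ≤ ENNReal.ofReal C := by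
  simpa [absMomBdd] using h

lemma integrable_exp_I (μ : Measure ℝ) [IsProbabilityMeasure μ] (t : ℝ) :
    Integrable (fun x : ℝ => Complex.exp (Complex.I * (t * x))) μ := by
  refine (integrable_const (1 : ℝ)).mono' (by fun_prop) (Eventually.of_forall fun x => ?_)
  rw [← Complex.ofReal_mul, Complex.norm_exp_I_mul_ofReal]

lemma integral_cos_eq {μ : Measure ℝ} {f : ℝ → ℝ} (h : realCharFn μ f) (t : ℝ) :
    ∫ x, Real.cos (t * x) ∂μ = f t := by
  have := h.1
  have h1 := congrArg Complex.re (h.2 t)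
  have h2 := integral_re (integrable_exp_I μ t)
  rw [Complex.ofReal_re, charFn] at h1
  rw [← h1]
  refine Eq.trans ?_ h2
  refine integral_congr_ae (Eventually.of_forall fun x => ?_)
  simp only [RCLike.re_to_complex]
  rw [← Complex.ofReal_mul, mul_comm Complex.I, Complex.exp_ofReal_mul_I_re]

lemma integral_sin_eq {μ : Measure ℝ} {f : ℝ → ℝ} (h : realCharFn μ f) (t : ℝ) :
    ∫ x, Real.sin (t * x) ∂μ = 0 := by
  have := h.1
  have h1 := congrArg Complex.im (h.2 t)
  have h2 := integral_im (integrable_exp_I μ t)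
  rw [Complex.ofReal_im, charFn] at h1
  rw [← h1]
  refine Eq.trans ?_ h2
  refine integral_congr_ae (Eventually.of_forall fun x => ?_)
  simp only [RCLike.im_to_complex]
  rw [← Complex.ofReal_mul, mul_comm Complex.I, Complex.exp_ofReal_mul_I_im]

lemma integral_sin_sub_eq {μ : Measure ℝ} {f : ℝ → ℝ} (h : realCharFn μ f) (t y : ℝ) :
    ∫ x, Real.sin (t * (y - x)) ∂μ = Real.sin (t * y) * f t := by
  have := h.1
  have hc : Integrable (fun x => Real.cos (t * x)) μ :=
    (integrable_const (1 : ℝ)).mono' (by fun_prop)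
      (Eventually.of_forall fun x => Real.abs_cos_le_one _)
  have hs : Integrable (fun x => Real.sin (t * x)) μ :=
    (integrable_const (1 : ℝ)).mono' (by fun_prop)
      (Eventually.of_forall fun x => Real.abs_sin_le_one _)
  simp_rw [mul_sub, Real.sin_sub]
  rw [integral_sub (hc.const_mul _) (hs.const_mul _), integral_const_mul, integral_const_mul,
    integral_cos_eq h, integral_sin_eq h]
  ring

lemma abs_Sint_le {k : ℝ → ℝ} (hki : Integrable k) (u : ℝ) :
    |Sint k u| ≤ (2 * Real.pi)⁻¹ * (|u| * ∫ t, |k t|) := by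
  rw [Sint, abs_mul, abs_of_pos (by positivity : 0 < (2 * Real.pi)⁻¹)]
  gcongr
  exact abs_integral_sin_div_le hki u

lemma integral_Sint_sub {μ : Measure ℝ} {f : ℝ → ℝ} (h : realCharFn μ f)
    (hμ : Integrable (fun x => x) μ) {k : ℝ → ℝ} (hk : Measurable k) (hki : Integrable k)
    (y : ℝ) : ∫ d, Sint k (y - d) ∂μ = Sint (fun t => k t * f t) y := by
  have := h.1
  simp only [Sint]
  rw [integral_const_mul, integral_integral_swap]
  · congr 2
    funext t
    calc ∫ d, Real.sin (t * (y - d)) / t * k t ∂μ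
        = ∫ d, Real.sin (t * (y - d)) * (k t / t) ∂μ := by
          congr 1; funext d; ring
      _ = _ := by rw [integral_mul_const, integral_sin_sub_eq h]; ring
  · have hi : Integrable (fun p : ℝ × ℝ => |y - p.1| * |k p.2|) (μ.prod volume) :=
      ((integrable_const y).sub hμ).abs.mul_prod hki.abs
    refine hi.mono' ?_ (Eventually.of_forall fun p => ?_)
    · exact Measurable.aestronglyMeasurable (by simp only [Function.uncurry_def]; fun_prop)
    · simp only [Function.uncurry_def]
      rw [norm_mul]
      exact mul_le_mul_of_nonneg_right (abs_sin_div_le _ _) (norm_nonneg _)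

/-- Averaging the inversion integral over the convolution `F_W * F_δ` multiplies the weight by
`f_δ`, so the `f_δ` in the denominator of `L₁` cancels in expectation. -/
lemma integral_Sint_conv {μW μδ : Measure ℝ} [IsProbabilityMeasure μW] {f : ℝ → ℝ}
    (h : realCharFn μδ f) (hδ : Integrable (fun x => x) μδ) (hW : Integrable (fun x => x) μW)
    {k : ℝ → ℝ} (hk : Measurable k) (hki : Integrable k) (x : ℝ) :
    Integrable (fun y => Sint k (x - y)) ((μW.prod μδ).map fun p => p.1 + p.2) ∧
    ∫ y, Sint k (x - y) ∂((μW.prod μδ).map fun p => p.1 + p.2) =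
      ∫ w, Sint (fun t => k t * f t) (x - w) ∂μW := by
  have := h.1
  have hSm := measurable_Sint hk
  have hi : Integrable (fun p : ℝ × ℝ => Sint k (x - (p.1 + p.2))) (μW.prod μδ) := by
    have hb : Integrable (fun p : ℝ × ℝ =>
        (2 * Real.pi)⁻¹ * (|x - (p.1 + p.2)| * ∫ t, |k t|)) (μW.prod μδ) := by
      have h1 : Integrable (fun p : ℝ × ℝ => p.1) (μW.prod μδ) := hW.comp_fst μδ
      have h2 : Integrable (fun p : ℝ × ℝ => p.2) (μW.prod μδ) := hδ.comp_snd μW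
      exact (((integrable_const x).sub (h1.add h2)).abs.mul_const _).const_mul _
    exact hb.mono' (Measurable.aestronglyMeasurable (by fun_prop))
      (Eventually.of_forall fun p => abs_Sint_le hki _)
  have hm : Measurable fun y => Sint k (x - y) := by fun_prop
  have hadd : Measurable fun p : ℝ × ℝ => p.1 + p.2 := by fun_prop
  refine ⟨(integrable_map_measure hm.aestronglyMeasurable hadd.aemeasurable).2 hi, ?_⟩
  rw [integral_map hadd.aemeasurable hm.aestronglyMeasurable, integral_prod _ hi]
  congr 1
  funext w
  rw [← integral_Sint_sub h hδ hk hki]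
  congr 1; funext d; congr 1; ring

lemma ae_measure_singleton_eq_zero (μ : Measure ℝ) [IsProbabilityMeasure μ] :
    ∀ᵐ x : ℝ, μ {x} = 0 := by
  have h : Set.Countable {x : ℝ | 0 < μ {x}} :=
    Measure.countable_meas_pos_of_disjoint_iUnion (μ := μ) (As := fun x : ℝ => {x})
      (fun x => measurableSet_singleton x)
      (fun x y hxy => Set.disjoint_singleton.2 hxy)
  -- a probability measure has countably many atoms
  have h2 := measure_eq_zero_iff_ae_notMem.1 (h.measure_zero volume)
  filter_upwards [h2] with x hx
  simpa using hx

lemma integrable_sign_sub (μ : Measure ℝ) [IsProbabilityMeasure μ] (x : ℝ) :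
    Integrable (fun w => Real.sign (x - w)) μ := by
  refine (integrable_const (1 : ℝ)).mono'
    (measurable_real_sign.comp (by fun_prop)).aestronglyMeasurable
    (Eventually.of_forall fun w => ?_)
  rcases Real.sign_apply_eq (x - w) with h | h | h <;> simp [h]

/-- The distribution function as an averaged Heaviside function, at points carrying no mass. -/
lemma cdfF_eq {μ : Measure ℝ} [IsProbabilityMeasure μ] {x : ℝ} (hx : μ {x} = 0) :
    cdfF μ x = 1 / 2 + ∫ w, Real.sign (x - w) / 2 ∂μ := by
  have h1 : cdfF μ x = ∫ w, (Set.Iic x).indicator (fun _ => (1 : ℝ)) w ∂μ := by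
    rw [integral_indicator_const _ measurableSet_Iic]
    simp [cdfF, Measure.real]
  have h2 : (1 / 2 : ℝ) = ∫ _, (1 / 2 : ℝ) ∂μ := by simp
  rw [h1, h2, ← integral_add (integrable_const _) ((integrable_sign_sub μ x).div_const 2)]
  refine integral_congr_ae ?_
  filter_upwards [measure_eq_zero_iff_ae_notMem.1 hx] with w hw
  rcases lt_trichotomy w x with h | h | h
  · rw [Real.sign_of_pos (by linarith), Set.indicator_of_mem (Set.mem_Iic.2 h.le)]; norm_num
  · exact absurd h hw
  · rw [Real.sign_of_neg (by linarith), Set.indicator_of_notMem (by simpa using h)]; norm_num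

lemma lintegral_sign_sq_le (y : ℝ) :
    ∫⁻ x, ENNReal.ofReal (((Real.sign (x - y) - Real.sign x) / 2) ^ 2) ≤ ENNReal.ofReal |y| := by
  have hle : ∀ x, ENNReal.ofReal (((Real.sign (x - y) - Real.sign x) / 2) ^ 2) ≤
      (Set.uIcc 0 y).indicator (fun _ => 1) x := by
    intro x
    by_cases hx : x ∈ Set.uIcc 0 y
    · rw [Set.indicator_of_mem hx, ENNReal.ofReal_le_one]
      rcases Real.sign_apply_eq (x - y) with h | h | h <;>
        rcases Real.sign_apply_eq x with h' | h' | h' <;> rw [h, h'] <;> norm_num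
    · rw [Set.indicator_of_notMem hx]
      rw [Set.mem_uIcc] at hx
      push Not at hx
      rcases lt_trichotomy x 0 with h | rfl | h
      · have : x < y := by
          by_contra hc
          exact absurd (hx.2 (not_lt.1 hc)) (by linarith)
        rw [Real.sign_of_neg h, Real.sign_of_neg (by linarith)]; simp
      · rcases le_total 0 y with h0 | h0
        · exact absurd (hx.1 le_rfl) (by linarith)
        · exact absurd (hx.2 h0) (by linarith)
      · have : y < x := hx.1 h.le
        rw [Real.sign_of_pos h, Real.sign_of_pos (by linarith)]; simp
  refine (lintegral_mono hle).trans ?_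
  rw [lintegral_indicator measurableSet_uIcc, setLIntegral_const, one_mul, Set.uIcc,
    Real.volume_Icc, sup_sub_inf_eq_abs_sub, sub_zero]

/-- Integrated second moment of the summand about the Heaviside function of `x`: replacing `sign x` by
`sign (x − y)` changes the integral by at most a multiple of `|y|`. -/
lemma lintegral_var_le {ν : Measure ℝ} [IsProbabilityMeasure ν] {k : ℝ → ℝ} (hk : Measurable k) :
    ∫⁻ x, ∫⁻ y, ENNReal.ofReal ((1 / 2 + Sint k (x - y) - (1 / 2 + Real.sign x / 2)) ^ 2) ∂ν ≤
      2 * (∫⁻ u, ENNReal.ofReal (Adev k u ^ 2)) + 2 * ∫⁻ y, ENNReal.ofReal |y| ∂ν := by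
  have hA := measurable_Adev hk
  have hsg := measurable_real_sign
  have hSm := measurable_Sint hk
  rw [lintegral_lintegral_swap (Measurable.aemeasurable (by
    simp only [Function.uncurry_def]; fun_prop))]
  have hy : ∀ y, ∫⁻ x, ENNReal.ofReal
      ((1 / 2 + Sint k (x - y) - (1 / 2 + Real.sign x / 2)) ^ 2) ≤
      2 * (∫⁻ u, ENNReal.ofReal (Adev k u ^ 2)) + 2 * ENNReal.ofReal |y| := by
    intro y
    have hle : ∀ x, ENNReal.ofReal ((1 / 2 + Sint k (x - y) - (1 / 2 + Real.sign x / 2)) ^ 2) ≤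
        2 * ENNReal.ofReal (Adev k (x - y) ^ 2) +
        2 * ENNReal.ofReal (((Real.sign (x - y) - Real.sign x) / 2) ^ 2) := by
      intro x
      rw [← ENNReal.ofReal_ofNat 2, ← ENNReal.ofReal_mul (by norm_num),
        ← ENNReal.ofReal_mul (by norm_num), ← ENNReal.ofReal_add (by positivity) (by positivity)]
      refine ENNReal.ofReal_le_ofReal ?_
      have : 1 / 2 + Sint k (x - y) - (1 / 2 + Real.sign x / 2) =
        Adev k (x - y) + (Real.sign (x - y) - Real.sign x) / 2 := by rw [Adev]; ring
      rw [this]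
      nlinarith [sq_nonneg (Adev k (x - y) - (Real.sign (x - y) - Real.sign x) / 2)]
    refine (lintegral_mono hle).trans ?_
    rw [lintegral_add_left (by fun_prop), lintegral_const_mul _ (by fun_prop),
      lintegral_const_mul _ (by fun_prop),
      lintegral_sub_right_eq_self (fun u => ENNReal.ofReal (Adev k u ^ 2)) y]
    gcongr
    exact lintegral_sign_sq_le y
  refine (lintegral_mono hy).trans ?_
  rw [lintegral_add_left (by fun_prop), lintegral_const, measure_univ, mul_one,
    lintegral_const_mul _ (by fun_prop)]

/-- Integrated risk bound in terms of the two frequency integrals. The kernel and the error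
characteristic function enter only through integrability and evenness of the weights and their
Lipschitz behaviour at `0`; the constants `cv`, `cb` do not appear in the bound. -/
theorem lintegral_riskSq_le {μW μδ : Measure ℝ} [IsProbabilityMeasure μW] {f KFt : ℝ → ℝ}
    {h : ℝ} (hf : realCharFn μδ f) (hf0 : ∀ t, f t ≠ 0)
    {C₁ C₂ : ℝ} (hδ : absMomBdd μδ 1 C₁) (hW : absMomBdd μW 1 C₂)
    (hK : Measurable KFt) (hfm : Measurable f)
    (hKe : ∀ t, KFt (-t) = KFt t) (hfe : ∀ t, f (-t) = f t)
    (hvi : Integrable fun t => KFt (h * t) / f t) (hbi : Integrable fun t => KFt (h * t))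
    {cv cb : ℝ} (hvc : ∀ t, |KFt (h * t) / f t - 1| ≤ cv * |t|)
    (hbc : ∀ t, |KFt (h * t) - 1| ≤ cb * |t|) {n : ℕ} (hn : 1 ≤ n) :
    (∫⁻ x : ℝ, riskSq μW μδ n (fun X => FhatD f KFt h X x) (cdfF μW x)) ≤
      (n : ℝ≥0∞)⁻¹ * (2 * (∫⁻ t, ENNReal.ofReal (((KFt (h * t) / f t - 1) / t) ^ 2)) +
        2 * (ENNReal.ofReal C₂ + ENNReal.ofReal C₁)) +
      ∫⁻ t, ENNReal.ofReal (((KFt (h * t) - 1) / t) ^ 2 * ‖charFn μW t‖ ^ 2) := by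
  have := hf.1
  set kv : ℝ → ℝ := fun t => KFt (h * t) / f t with hkv
  set kb : ℝ → ℝ := fun t => KFt (h * t) with hkb
  have hkvm : Measurable kv := by rw [hkv]; fun_prop
  have hkbm : Measurable kb := by rw [hkb]; fun_prop
  have hkve : ∀ t, kv (-t) = kv t := fun t => by simp [hkv, hKe, hfe]
  have hkbe : ∀ t, kb (-t) = kb t := fun t => by simp [hkb, hKe]
  have hδi := integrable_of_absMomBdd hδ
  have hWi := integrable_of_absMomBdd hW
  have hadd : Measurable fun p : ℝ × ℝ => p.1 + p.2 := by fun_prop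
  set ν : Measure ℝ := (μW.prod μδ).map fun p => p.1 + p.2 with hν
  have hνp : IsProbabilityMeasure ν := Measure.isProbabilityMeasure_map hadd.aemeasurable
  have hSm := measurable_Sint hkvm
  have hmul : (fun t => kv t * f t) = kb := by
    funext t; simp only [hkv, hkb]; exact div_mul_cancel₀ _ (hf0 t)
  have hbias : ∀ᵐ x : ℝ, ∫ y, (1 / 2 + Sint kv (x - y)) ∂ν - cdfF μW x =
      ∫ w, Adev kb (x - w) ∂μW := by
    filter_upwards [ae_measure_singleton_eq_zero μW] with x hx
    obtain ⟨hi, he⟩ := integral_Sint_conv hf hδi hWi hkvm hvi x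
    have hSi : Integrable (fun w => Sint kb (x - w)) μW := by
      have hb : Integrable (fun w => (2 * Real.pi)⁻¹ * (|x - w| * ∫ t, |kb t|)) μW :=
        (((integrable_const x).sub hWi).abs.mul_const _).const_mul _
      exact hb.mono' ((measurable_Sint hkbm).comp (by fun_prop)).aestronglyMeasurable
        (Eventually.of_forall fun w => abs_Sint_le hbi _)
    rw [integral_add (integrable_const _) hi, he, hmul, cdfF_eq hx]
    simp only [Adev]
    rw [integral_sub hSi ((integrable_sign_sub μW x).div_const 2)]
    simp
  have hrisk : ∀ᵐ x : ℝ, riskSq μW μδ n (fun X => FhatD f KFt h X x) (cdfF μW x) ≤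
      (n : ℝ≥0∞)⁻¹ * (∫⁻ y, ENNReal.ofReal
        ((1 / 2 + Sint kv (x - y) - (1 / 2 + Real.sign x / 2)) ^ 2) ∂ν) +
      ENNReal.ofReal ((∫ w, Adev kb (x - w) ∂μW) ^ 2) := by
    filter_upwards [hbias] with x hx
    rw [← hx]
    exact lintegral_sample_mean_sq_le (Y := fun y => 1 / 2 + Sint kv (x - y)) (by fun_prop) _ _ hn
  have hsg := measurable_real_sign
  have hVm : Measurable fun x => ∫⁻ y, ENNReal.ofReal
        ((1 / 2 + Sint kv (x - y) - (1 / 2 + Real.sign x / 2)) ^ 2) ∂ν :=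
    Measurable.lintegral_prod_right (by fun_prop)
  refine (lintegral_mono_ae hrisk).trans ?_
  rw [lintegral_add_left (hVm.const_mul _), lintegral_const_mul _ hVm]
  refine add_le_add (mul_le_mul' le_rfl ?_) ?_
  · refine (lintegral_var_le hkvm).trans (add_le_add (mul_le_mul' le_rfl ?_) (mul_le_mul' le_rfl ?_))
    -- for the point mass at `0` the average of `Adev kv` is `Adev kv` itself
    · have h0 := lintegral_dev_sq_le hkvm hkve hvi hvc (Measure.dirac 0)
        (integrable_dirac (by simp))
      simpa [charFn] using h0
    · rw [hν, lintegral_map (by fun_prop) hadd]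
      calc ∫⁻ p : ℝ × ℝ, ENNReal.ofReal |p.1 + p.2| ∂μW.prod μδ
          ≤ ∫⁻ p : ℝ × ℝ, (ENNReal.ofReal |p.1| + ENNReal.ofReal |p.2|) ∂μW.prod μδ := by
            refine lintegral_mono fun p => ?_
            rw [← ENNReal.ofReal_add (abs_nonneg _) (abs_nonneg _)]
            exact ENNReal.ofReal_le_ofReal (abs_add_le _ _)
        _ = (∫⁻ w, ENNReal.ofReal |w| ∂μW) + ∫⁻ d, ENNReal.ofReal |d| ∂μδ := by
            rw [lintegral_add_left (by fun_prop), lintegral_prod _ (by fun_prop),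
              lintegral_prod _ (by fun_prop)]
            simp
        _ ≤ _ := add_le_add (lintegral_abs_le hW) (lintegral_abs_le hδ)
  · exact lintegral_dev_sq_le hkbm hkbe hbi hbc μW hWi

/-! ### Bounded densities force `α > 1` -/

lemma realCharFn_eq_re {μ : Measure ℝ} {f : ℝ → ℝ} (h : realCharFn μ f) :
    f = fun t => (charFn μ t).re := by
  funext t; rw [h.2 t, Complex.ofReal_re]

lemma measurable_of_realCharFn {μ : Measure ℝ} {f : ℝ → ℝ} (h : realCharFn μ f) :
    Measurable f := by
  have := h.1
  rw [realCharFn_eq_re h]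
  exact Complex.measurable_re.comp (measurable_charFn μ)

lemma even_of_realCharFn {μ : Measure ℝ} {f : ℝ → ℝ} (h : realCharFn μ f) (t : ℝ) :
    f (-t) = f t := by
  rw [← integral_cos_eq h, ← integral_cos_eq h]
  simp

/-- The Gaussian-damped mass of the characteristic function is bounded uniformly in `m`: by Parseval it
is the integral against `μ` of a Gaussian whose Lebesgue mass does not depend on `m`. -/
lemma lintegral_mul_gdamp_le {C : ℝ} {μ : Measure ℝ} {f : ℝ → ℝ}
    (h : realCharFn μ f) (hf0 : ∀ t, 0 < f t) (hd : hasDensityBdd μ C) {m : ℝ} (hm : 0 < m) :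
    ∫⁻ t, ENNReal.ofReal (f t * gdamp m t) ≤
      ENNReal.ofReal C * (ENNReal.ofReal (2 * √Real.pi) *
        ∫⁻ v : ℝ, ENNReal.ofReal (Real.exp (-v ^ 2))) := by
  have := h.1
  have hgm := gdamp_measurable m
  have hfm := measurable_of_realCharFn h
  set G : ℝ → ℝ := fun x => 2 * √Real.pi * (m * Real.exp (-(x * m) ^ 2)) with hG
  have hG0 : ∀ x, 0 ≤ G x := fun x => by simp only [hG]; positivity
  have hprod : Integrable (fun p : ℝ × ℝ => Real.cos (p.1 * p.2) * gdamp m p.1)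
      (volume.prod μ) := by
    have hb : Integrable (fun p : ℝ × ℝ => gdamp m p.1 * (1 : ℝ)) (volume.prod μ) :=
      (gdamp_integrable hm).mul_prod (integrable_const 1)
    refine hb.mono' (Measurable.aestronglyMeasurable (by fun_prop))
      (Eventually.of_forall fun p => ?_)
    rw [norm_mul, mul_one, Real.norm_of_nonneg (gdamp_pos m p.1).le]
    exact mul_le_of_le_one_left (gdamp_pos m p.1).le (Real.abs_cos_le_one _)
  have hGi : Integrable G μ := by
    have := hprod.integral_prod_right
    simpa only [integral_cos_gdamp hm] using this
  have hfi : Integrable (fun t => f t * gdamp m t) := by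
    have := hprod.integral_prod_left
    simpa only [integral_mul_const, integral_cos_eq h] using this
  have heq : ∫ t, f t * gdamp m t = ∫ x, G x ∂μ := by
    have := integral_integral_swap (f := fun t x => Real.cos (t * x) * gdamp m t) hprod
    simpa only [integral_mul_const, integral_cos_eq h, integral_cos_gdamp hm] using this
  rw [← ofReal_integral_eq_lintegral_ofReal hfi
    (Eventually.of_forall fun t => (mul_pos (hf0 t) (gdamp_pos m t)).le), heq,
    ofReal_integral_eq_lintegral_ofReal hGi (Eventually.of_forall hG0)]
  obtain ⟨p, hpm, hp0, hpC, rfl⟩ := hd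
  have hGm : Measurable fun x => ENNReal.ofReal (G x) := by fun_prop
  rw [lintegral_withDensity_eq_lintegral_mul _ (by fun_prop) hGm]
  calc ∫⁻ x, ((fun x => ENNReal.ofReal (p x)) * fun x => ENNReal.ofReal (G x)) x
      ≤ ∫⁻ x, ENNReal.ofReal C * ENNReal.ofReal (G x) :=
        lintegral_mono fun x => mul_le_mul' (ENNReal.ofReal_le_ofReal (hpC x)) le_rfl
    _ = ENNReal.ofReal C * ∫⁻ x, ENNReal.ofReal (G x) := lintegral_const_mul _ hGm
    _ = _ := by
        congr 1
        have h1 : ∀ x, ENNReal.ofReal (G x) = ENNReal.ofReal (2 * √Real.pi * m) *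
            ENNReal.ofReal (Real.exp (-(m * x) ^ 2)) := fun x => by
          rw [← ENNReal.ofReal_mul (by positivity)]
          simp only [hG]; congr 1; rw [mul_comm x m]; ring
        simp_rw [h1]
        rw [lintegral_const_mul _ (by fun_prop),
          lintegral_comp_mul_left_real (f := fun v => ENNReal.ofReal (Real.exp (-v ^ 2)))
            (by fun_prop) hm, ← mul_assoc, ← ENNReal.ofReal_mul (by positivity)]
        congr 2
        field_simp

/-- A nonnegative characteristic function of a law with bounded density is integrable. -/
lemma integrable_of_hasDensityBdd {C : ℝ} {μ : Measure ℝ} {f : ℝ → ℝ}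
    (h : realCharFn μ f) (hf0 : ∀ t, 0 < f t) (hd : hasDensityBdd μ C) : Integrable f := by
  have hfm := measurable_of_realCharFn h
  have hgm := gdamp_measurable
  refine ⟨hfm.aestronglyMeasurable, ?_⟩
  rw [hasFiniteIntegral_iff_ofReal (Eventually.of_forall fun t => (hf0 t).le)]
  have hlim : ∀ t, liminf (fun n : ℕ => ENNReal.ofReal (f t * gdamp ((n : ℝ) + 1) t)) atTop =
      ENNReal.ofReal (f t) := fun t => by
    refine Tendsto.liminf_eq ?_
    have := ((gdamp_tendsto t).const_mul (f t))
    rw [mul_one] at this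
    exact ENNReal.tendsto_ofReal this
  calc ∫⁻ t, ENNReal.ofReal (f t)
      = ∫⁻ t, liminf (fun n : ℕ => ENNReal.ofReal (f t * gdamp ((n : ℝ) + 1) t)) atTop := by
        simp_rw [hlim]
    _ ≤ liminf (fun n : ℕ => ∫⁻ t, ENNReal.ofReal (f t * gdamp ((n : ℝ) + 1) t)) atTop :=
        lintegral_liminf_le fun n => by fun_prop
    _ ≤ liminf (fun _ : ℕ => ENNReal.ofReal C * (ENNReal.ofReal (2 * √Real.pi) *
        ∫⁻ v : ℝ, ENNReal.ofReal (Real.exp (-v ^ 2)))) atTop :=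
        liminf_le_liminf (Eventually.of_forall fun n =>
          lintegral_mul_gdamp_le h hf0 hd (by positivity))
    _ < ⊤ := by
        rw [liminf_const]
        refine ENNReal.mul_lt_top ENNReal.ofReal_lt_top
          (ENNReal.mul_lt_top ENNReal.ofReal_lt_top ?_)
        exact (hasFiniteIntegral_iff_ofReal (Eventually.of_forall fun v =>
          (Real.exp_pos _).le)).1 integrable_exp_neg_sq.2

/-- The class `ℱ₃(α, C)` is empty unless `α > 1`: its members have integrable characteristic functions
bounded below by a multiple of `(1 + |t|)^{-α}`. -/
lemma one_lt_of_memF3 {α C : ℝ} {μ : Measure ℝ} {f : ℝ → ℝ}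
    (h : memF3 α C μ f) : 1 < α := by
  obtain ⟨hr, hf0, hlow, hd, -⟩ := h
  by_contra hα
  push Not at hα
  have hi := (integrable_of_hasDensityBdd hr hf0 hd).integrableOn (s := Set.Ioi 1)
  have : IntegrableOn (fun t : ℝ => t ^ (-1 : ℝ)) (Set.Ioi 1) := by
    refine Integrable.mono' (hi.const_mul (2 * C)) (by fun_prop) ?_
    refine (ae_restrict_iff' measurableSet_Ioi).2 (Eventually.of_forall fun t ht => ?_)
    have ht : (1 : ℝ) < t := ht
    rw [Real.norm_of_nonneg (by positivity)]
    have h1 := hlow t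
    rw [abs_of_pos (by linarith)] at h1
    have h2 : (1 + t) ^ (-1 : ℝ) ≤ (1 + t) ^ (-α) :=
      Real.rpow_le_rpow_of_exponent_le (by linarith) (by linarith)
    rw [Real.rpow_neg_one] at h2 ⊢
    have h3 : t⁻¹ ≤ 2 * (1 + t)⁻¹ := by
      rw [← div_eq_mul_inv, inv_eq_one_div, div_le_div_iff₀ (by linarith) (by linarith)]
      linarith
    linarith
  rw [integrableOn_Ioi_rpow_iff one_pos] at this
  exact lt_irrefl _ this

/-! ### The polynomial kernel and the variance integral -/

lemma measurable_polyKFt (r s : ℕ) : Measurable (polyKFt r s) := by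
  unfold polyKFt
  exact Measurable.ite (measurableSet_le (by fun_prop) (by fun_prop)) (by fun_prop) (by fun_prop)

lemma polyKFt_neg {r : ℕ} (hr : Even r) (s : ℕ) (t : ℝ) : polyKFt r s (-t) = polyKFt r s t := by
  simp [polyKFt, hr.neg_pow]

lemma polyKFt_mem_Icc {r : ℕ} (hr : Even r) (s : ℕ) (t : ℝ) :
    polyKFt r s t ∈ Set.Icc (0 : ℝ) 1 := by
  unfold polyKFt
  split_ifs with h
  · have h0 : 0 ≤ t ^ r := hr.pow_nonneg t
    have h1 : t ^ r ≤ 1 := by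
      rw [← hr.pow_abs]; exact pow_le_one₀ (abs_nonneg t) h
    exact ⟨pow_nonneg (by linarith) s, pow_le_one₀ (by linarith) (by linarith)⟩
  · simp

lemma abs_polyKFt_sub_one_le_one {r : ℕ} (hr : Even r) (s : ℕ) (t : ℝ) :
    |polyKFt r s t - 1| ≤ 1 := by
  obtain ⟨h0, h1⟩ := polyKFt_mem_Icc hr s t
  rw [abs_le]; constructor <;> linarith

lemma abs_polyKFt_sub_one_le_pow {r s : ℕ} (hr : Even r) (hs : 1 ≤ s) (t : ℝ) :
    |polyKFt r s t - 1| ≤ s * |t| ^ r := by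
  have hs' : (1 : ℝ) ≤ s := by exact_mod_cast hs
  by_cases h : |t| ≤ 1
  · have h1 : t ^ r ≤ 1 := by
      rw [← hr.pow_abs]; exact pow_le_one₀ (abs_nonneg t) h
    -- Bernoulli's inequality
    have hb := one_add_mul_le_pow (a := -t ^ r) (by linarith) s
    have := (polyKFt_mem_Icc hr s t).2
    rw [abs_sub_comm, abs_of_nonneg (by linarith), polyKFt, if_pos h, hr.pow_abs,
      sub_eq_add_neg 1 (t ^ r)]
    linarith
  · refine (abs_polyKFt_sub_one_le_one hr s t).trans ?_
    have : 1 ≤ |t| ^ r := one_le_pow₀ (by linarith)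
    nlinarith

lemma abs_polyKFt_sub_one_le {r s : ℕ} (hr2 : 2 ≤ r) (hr : Even r) (hs : 1 ≤ s) (t : ℝ) :
    |polyKFt r s t - 1| ≤ s * |t| := by
  have hs' : (1 : ℝ) ≤ s := by exact_mod_cast hs
  by_cases h : |t| ≤ 1
  · refine (abs_polyKFt_sub_one_le_pow hr hs t).trans ?_
    have := pow_le_of_le_one (abs_nonneg t) h (n := r) (by omega)
    gcongr
  · refine (abs_polyKFt_sub_one_le_one hr s t).trans ?_
    nlinarith

/-- A characteristic function is Lipschitz at `0`, with constant `E|δ|`. -/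
lemma abs_one_sub_le {μ : Measure ℝ} {f : ℝ → ℝ} (h : realCharFn μ f) {C : ℝ} (hC : 0 ≤ C)
    (hm : absMomBdd μ 1 C) (t : ℝ) : |f t - 1| ≤ C * |t| := by
  have := h.1
  have hi := integrable_of_absMomBdd hm
  have hmom : ∫ x, |x| ∂μ ≤ C := by
    have h1 := lintegral_abs_le hm
    rwa [← ofReal_integral_eq_lintegral_ofReal hi.abs (Eventually.of_forall fun x => abs_nonneg x),
      ENNReal.ofReal_le_ofReal_iff hC] at h1
  have hE := integrable_exp_I μ t
  have h2 : ((f t - 1 : ℝ) : ℂ) = ∫ x : ℝ, (Complex.exp (Complex.I * (t * x)) - 1) ∂μ := by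
    rw [integral_sub hE (integrable_const _)]
    have := h.2 t
    rw [charFn] at this
    rw [this]; simp
  have h3 : |f t - 1| = ‖((f t - 1 : ℝ) : ℂ)‖ := by
    rw [Complex.norm_real]; rfl
  rw [h3, h2]
  calc ‖∫ x : ℝ, (Complex.exp (Complex.I * (t * x)) - 1) ∂μ‖
      ≤ ∫ x : ℝ, |t| * |x| ∂μ := by
        refine norm_integral_le_of_norm_le (hi.abs.const_mul _) (Eventually.of_forall fun x => ?_)
        rw [← Complex.ofReal_mul, ← abs_mul]
        exact Real.norm_exp_I_mul_ofReal_sub_one_le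
    _ = |t| * ∫ x, |x| ∂μ := integral_const_mul _ _
    _ ≤ C * |t| := by rw [mul_comm]; gcongr

lemma inv_le_of_memF3 {α C : ℝ} {μ : Measure ℝ} {f : ℝ → ℝ} (h : memF3 α C μ f) (t : ℝ) :
    (f t)⁻¹ ≤ C * (1 + |t|) ^ α := by
  obtain ⟨-, hf0, hlow, -, -⟩ := h
  have h1 := hlow t
  have hp : 0 < 1 + |t| := by positivity
  rw [Real.rpow_neg hp.le] at h1
  have h2 : 0 < (1 + |t|) ^ α := by positivity
  rw [inv_le_iff_one_le_mul₀ (hf0 t)]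
  rw [inv_le_iff_one_le_mul₀ h2] at h1
  linarith

/-! Bounds for the variance weight `K^Ft(ht)/f_δ(t)`. -/

section Weights
variable {α C : ℝ} {μ : Measure ℝ} {f : ℝ → ℝ} {r s : ℕ} {h : ℝ}

lemma abs_kv_le (hF : memF3 α C μ f) (hα : 0 < α) (hC : 0 < C) (hr : Even r) (hh : 0 < h) {t : ℝ}
    (ht : 1 < |t|) :
    |polyKFt r s (h * t) / f t| ≤
      (Set.Icc (-h⁻¹) h⁻¹).indicator (fun t => C * 2 ^ α * |t| ^ α) t := by
  have hf0 := hF.2.1 t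
  by_cases hm : t ∈ Set.Icc (-h⁻¹) h⁻¹
  · rw [Set.indicator_of_mem hm, abs_div, abs_of_pos hf0, div_eq_mul_inv]
    have h1 : |polyKFt r s (h * t)| ≤ 1 := by
      obtain ⟨h0, h1⟩ := polyKFt_mem_Icc hr s (h * t)
      rwa [abs_of_nonneg h0]
    calc |polyKFt r s (h * t)| * (f t)⁻¹ ≤ 1 * (C * (1 + |t|) ^ α) :=
          mul_le_mul h1 (inv_le_of_memF3 hF t) (inv_nonneg.2 hf0.le) zero_le_one
      _ ≤ C * (2 * |t|) ^ α := by
          rw [one_mul]; gcongr; linarith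
      _ = _ := by rw [Real.mul_rpow (by norm_num) (abs_nonneg t), mul_assoc]
  · have h1 : ¬ |h * t| ≤ 1 := by
      rw [abs_mul, abs_of_pos hh]
      intro hc
      refine hm (abs_le.1 ?_)
      rw [← one_div, le_div_iff₀ hh]; linarith
    rw [Set.indicator_of_notMem hm, polyKFt, if_neg h1]; simp

lemma abs_kv_sub_one_le (hF : memF3 α C μ f) (hα : 0 < α) (hC : 0 < C) (hr2 : 2 ≤ r)
    (hr : Even r) (hs : 1 ≤ s) (hh : 0 < h) (hh1 : h ≤ 1) {t : ℝ} (ht : |t| ≤ 1) :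
    |polyKFt r s (h * t) / f t - 1| ≤ (s + C) * (C * 2 ^ α) * |t| := by
  have hf0 := hF.2.1 t
  have e : polyKFt r s (h * t) / f t - 1 =
      ((polyKFt r s (h * t) - 1) - (f t - 1)) * (f t)⁻¹ := by
    field_simp; ring
  rw [e, abs_mul, abs_of_pos (inv_pos.2 hf0)]
  have h1 : |polyKFt r s (h * t) - 1| ≤ s * |t| := by
    refine (abs_polyKFt_sub_one_le hr2 hr hs _).trans ?_
    rw [abs_mul, abs_of_pos hh]
    gcongr
    exact mul_le_of_le_one_left (abs_nonneg t) hh1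
  have h2 := abs_one_sub_le hF.1 hC.le hF.2.2.2.2 t
  have h3 := inv_le_of_memF3 hF t
  have h4 : (1 + |t|) ^ α ≤ 2 ^ α := by gcongr; linarith
  have h5 : (f t)⁻¹ ≤ C * 2 ^ α := h3.trans (by gcongr)
  have h6 : |(polyKFt r s (h * t) - 1) - (f t - 1)| ≤ (s + C) * |t| := by
    refine (abs_sub _ _).trans ?_
    linarith
  calc _ ≤ ((s + C) * |t|) * (C * 2 ^ α) :=
        mul_le_mul h6 h5 (inv_nonneg.2 hf0.le) (by positivity)
    _ = _ := by ring

lemma abs_kv_sub_one_le_global (hF : memF3 α C μ f) (hα : 0 < α) (hC : 0 < C) (hr2 : 2 ≤ r)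
    (hr : Even r) (hs : 1 ≤ s) (hh : 0 < h) (hh1 : h ≤ 1) (t : ℝ) :
    |polyKFt r s (h * t) / f t - 1| ≤
      ((s + C) * (C * 2 ^ α) + (C * 2 ^ α * h⁻¹ ^ α + 1)) * |t| := by
  by_cases ht : |t| ≤ 1
  · refine (abs_kv_sub_one_le hF hα hC hr2 hr hs hh hh1 ht).trans ?_
    gcongr
    have : 0 ≤ C * 2 ^ α * h⁻¹ ^ α + 1 := by positivity
    linarith
  · push Not at ht
    have h1 := abs_kv_le (s := s) hF hα hC hr hh ht
    have h2 : (Set.Icc (-h⁻¹) h⁻¹).indicator (fun t => C * 2 ^ α * |t| ^ α) t ≤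
        C * 2 ^ α * h⁻¹ ^ α := by
      by_cases hm : t ∈ Set.Icc (-h⁻¹) h⁻¹
      · rw [Set.indicator_of_mem hm]
        have := abs_le.2 hm
        gcongr
      · rw [Set.indicator_of_notMem hm]
        positivity
    have h3 : |polyKFt r s (h * t) / f t - 1| ≤ C * 2 ^ α * h⁻¹ ^ α + 1 := by
      refine (abs_sub _ _).trans ?_
      rw [abs_one]; linarith
    have h4 : 0 ≤ (s + C) * (C * 2 ^ α) := by positivity
    have h5 : 0 ≤ C * 2 ^ α * h⁻¹ ^ α + 1 := by positivity
    nlinarith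

lemma integrable_polyKFt (hr : Even r) (hh : 0 < h) : Integrable fun t => polyKFt r s (h * t) := by
  have hK := measurable_polyKFt r s
  have hi : Integrable ((Set.Icc (-h⁻¹) h⁻¹).indicator fun _ => (1 : ℝ)) :=
    (integrable_indicator_iff measurableSet_Icc).2 (integrableOn_const (by simp))
  refine hi.mono' (Measurable.aestronglyMeasurable (by fun_prop)) (Eventually.of_forall fun t => ?_)
  obtain ⟨h0, h1⟩ := polyKFt_mem_Icc hr s (h * t)
  rw [Real.norm_of_nonneg h0]
  by_cases hm : t ∈ Set.Icc (-h⁻¹) h⁻¹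
  · rwa [Set.indicator_of_mem hm]
  · have h1 : ¬ |h * t| ≤ 1 := by
      rw [abs_mul, abs_of_pos hh]
      intro hc
      refine hm (abs_le.1 ?_)
      rw [← one_div, le_div_iff₀ hh]; linarith
    rw [Set.indicator_of_notMem hm, polyKFt, if_neg h1]

lemma integrable_kv (hF : memF3 α C μ f) (hα : 0 < α) (hr : Even r) (hC : 0 < C)
    (hh : 0 < h) : Integrable fun t => polyKFt r s (h * t) / f t := by
  have hf := measurable_of_realCharFn hF.1
  have hK := measurable_polyKFt r s
  refine ((integrable_polyKFt (s := s) hr hh).mul_const (C * (1 + h⁻¹) ^ α)).mono'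
    (Measurable.aestronglyMeasurable (by fun_prop)) (Eventually.of_forall fun t => ?_)
  have hf0 := hF.2.1 t
  obtain ⟨h0, -⟩ := polyKFt_mem_Icc hr s (h * t)
  rw [Real.norm_of_nonneg (div_nonneg h0 hf0.le), div_eq_mul_inv]
  by_cases hm : |h * t| ≤ 1
  · refine mul_le_mul_of_nonneg_left ((inv_le_of_memF3 hF t).trans ?_) h0
    rw [abs_mul, abs_of_pos hh] at hm
    have : |t| ≤ h⁻¹ := by rw [← one_div, le_div_iff₀ hh]; linarith
    gcongr
  · have h1 : polyKFt r s (h * t) = 0 := if_neg hm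
    simp [h1]

/-- Variance integral. The integrand is bounded for `|t| ≤ 1` and is
`O(t⁻² + |t|^{2α−2} 1(|t| ≤ 1/h))` for `|t| > 1`; both bounded parts are absorbed in a multiple of
`(1 + t²)⁻¹`. -/
lemma lintegral_kv_sq_le (hF : memF3 α C μ f) (hα : 1 < α) (hC : 0 < C) (hr2 : 2 ≤ r)
    (hr : Even r) (hs : 1 ≤ s) (hh : 0 < h) (hh1 : h ≤ 1) :
    ∫⁻ t, ENNReal.ofReal (((polyKFt r s (h * t) / f t - 1) / t) ^ 2) ≤
      ENNReal.ofReal ((2 * ((s + C) * (C * 2 ^ α)) ^ 2 + 4) * Real.pi) +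
        ENNReal.ofReal (4 * (C * 2 ^ α) ^ 2) * ENNReal.ofReal (h ^ (-(2 * α - 1))) := by
  set c := (s + C) * (C * 2 ^ α) with hc
  set d := C * 2 ^ α with hd
  have hd0 : 0 < d := by positivity
  have hle : ∀ t, ENNReal.ofReal (((polyKFt r s (h * t) / f t - 1) / t) ^ 2) ≤
      ENNReal.ofReal ((2 * c ^ 2 + 4) * (1 + t ^ 2)⁻¹) +
      (Set.Icc (-h⁻¹) h⁻¹).indicator
        (fun _ => ENNReal.ofReal (2 * d ^ 2 * h⁻¹ ^ (2 * α - 2))) t := by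
    intro t
    by_cases ht : |t| ≤ 1
    · refine le_add_right (ENNReal.ofReal_le_ofReal ?_)
      have h1 := abs_kv_sub_one_le (s := s) hF (by linarith) hC hr2 hr hs hh hh1 ht
      have h2 : |(polyKFt r s (h * t) / f t - 1) / t| ≤ c := by
        rw [abs_div]
        exact div_le_of_le_mul₀ (abs_nonneg t) (by positivity) h1
      have h3 : ((polyKFt r s (h * t) / f t - 1) / t) ^ 2 ≤ c ^ 2 := by
        rw [← sq_abs]; gcongr
      refine h3.trans ?_
      rw [← div_eq_mul_inv, le_div_iff₀ (by positivity)]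
      have : t ^ 2 ≤ 1 := by rw [← sq_abs]; exact pow_le_one₀ (abs_nonneg t) ht
      nlinarith [sq_nonneg c]
    · push Not at ht
      have h1 := abs_kv_le (s := s) hF (by linarith) hC hr hh ht
      have ht0 : 0 < |t| := by linarith
      have ht2 : 1 < t ^ 2 := by rw [← sq_abs]; exact one_lt_pow₀ ht (by norm_num)
      set kv := polyKFt r s (h * t) / f t with hkv
      have h2 : ((kv - 1) / t) ^ 2 ≤ 2 * (kv ^ 2 / t ^ 2) + 2 * (t ^ 2)⁻¹ := by
        rw [div_pow, ← div_eq_mul_inv, mul_div_assoc', ← add_div]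
        gcongr
        nlinarith [sq_nonneg (kv + 1)]
      have h3 : 2 * (t ^ 2)⁻¹ ≤ (2 * c ^ 2 + 4) * (1 + t ^ 2)⁻¹ := by
        rw [← div_eq_mul_inv, ← div_eq_mul_inv, div_le_div_iff₀ (by positivity) (by positivity)]
        nlinarith [mul_nonneg (sq_nonneg c) (sq_nonneg t)]
      by_cases hm : t ∈ Set.Icc (-h⁻¹) h⁻¹
      · rw [Set.indicator_of_mem hm] at h1 ⊢
        rw [← ENNReal.ofReal_add (by positivity) (by positivity)]
        refine ENNReal.ofReal_le_ofReal (h2.trans ?_)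
        have h4 : kv ^ 2 / t ^ 2 ≤ d ^ 2 * h⁻¹ ^ (2 * α - 2) := by
          calc kv ^ 2 / t ^ 2 ≤ (d * |t| ^ α) ^ 2 / |t| ^ 2 := by
                rw [← sq_abs kv, ← sq_abs t]; gcongr
            _ = d ^ 2 * |t| ^ (2 * α - 2) := by
                rw [Real.rpow_sub ht0, mul_pow, ← Real.rpow_natCast (|t| ^ α),
                  ← Real.rpow_mul ht0.le, mul_comm α, mul_div_assoc]
                norm_num
            _ ≤ _ := by
                have := abs_le.2 hm
                gcongr
                linarith
        linarith
      · rw [Set.indicator_of_notMem hm] at h1 ⊢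
        have : kv = 0 := abs_nonpos_iff.1 h1
        rw [add_zero]
        refine ENNReal.ofReal_le_ofReal (h2.trans ?_)
        rw [this]; simpa using h3
  refine (lintegral_mono hle).trans (le_of_eq ?_)
  rw [lintegral_add_left (by fun_prop), lintegral_indicator_const measurableSet_Icc,
    Real.volume_Icc]
  congr 1
  · rw [← ofReal_integral_eq_lintegral_ofReal (integrable_inv_one_add_sq.const_mul _)
      (Eventually.of_forall fun t => by positivity), integral_const_mul,
      integral_univ_inv_one_add_sq]
  · rw [← ENNReal.ofReal_mul (by positivity), ← ENNReal.ofReal_mul (by positivity)]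
    congr 1
    have : h ^ (-(2 * α - 1)) = h⁻¹ ^ (2 * α - 2) * h⁻¹ := by
      rw [Real.rpow_neg hh.le, ← Real.inv_rpow hh.le]
      conv_rhs => rw [← Real.rpow_add_one (by positivity)]
      congr 1; ring
    rw [this]; ring

end Weights

/-! ### The bias integral -/

/-- The rescaled bias integral is finite: the integrand is `O(|y|^{2r−2−2β})` at `0`, where
`r > β + 1/2` is needed, and `|y|^{−2−2β}` at infinity. -/
lemma lintegral_bias_profile_lt_top {β : ℝ} (hβ : 0 ≤ β) {r s : ℕ} (hr : Even r) (hs : 1 ≤ s)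
    (hrβ : β + 1 / 2 < r) :
    ∫⁻ y : ℝ, ENNReal.ofReal (((polyKFt r s y - 1) / y) ^ 2 * |y| ^ (-(2 * β))) < ⊤ := by
  set g : ℝ → ℝ := fun y => ((polyKFt r s y - 1) / y) ^ 2 * |y| ^ (-(2 * β)) with hg
  set G : ℝ → ℝ := fun y =>
    (Set.Ioc (0 : ℝ) 1).indicator (fun y => (s : ℝ) ^ 2 * y ^ (2 * r - 2 - 2 * β)) y +
      (Set.Ioi (1 : ℝ)).indicator (fun y => y ^ (-2 - 2 * β)) y with hG
  have hGi : Integrable G := by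
    refine Integrable.add ?_ ?_
    · rw [integrable_indicator_iff measurableSet_Ioc]
      refine Integrable.const_mul ?_ _
      exact (intervalIntegral.intervalIntegrable_rpow' (a := 0) (b := 1) (by linarith)).1
    · rw [integrable_indicator_iff measurableSet_Ioi]
      exact integrableOn_Ioi_rpow_of_lt (by linarith) one_pos
  have hG0 : ∀ y, 0 ≤ G y := fun y => by
    refine add_nonneg (Set.indicator_nonneg (fun y hy => ?_) y)
      (Set.indicator_nonneg (fun y hy => ?_) y)
    · have := hy.1; positivity
    · have : (1 : ℝ) < y := hy
      positivity
  have hpos : ∀ y, 0 < y → g y ≤ G y := by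
    intro y hy
    simp only [hg, hG, abs_of_pos hy]
    by_cases h1 : y ≤ 1
    · rw [Set.indicator_of_mem (Set.mem_Ioc.2 ⟨hy, h1⟩), Set.indicator_of_notMem (by simpa using h1), add_zero]
      have hk := abs_polyKFt_sub_one_le_pow (s := s) hr hs y
      rw [abs_of_pos hy] at hk
      calc ((polyKFt r s y - 1) / y) ^ 2 * y ^ (-(2 * β))
          ≤ ((s * y ^ r) / y) ^ 2 * y ^ (-(2 * β)) := by
            gcongr ?_ * _
            rw [div_pow, div_pow, ← sq_abs]
            gcongr
        _ = (s : ℝ) ^ 2 * y ^ (2 * r - 2 - 2 * β) := by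
            have : (2 * r - 2 - 2 * β : ℝ) = (r : ℝ) * 2 + (-2 + -(2 * β)) := by ring
            rw [this, Real.rpow_add hy, Real.rpow_add hy, Real.rpow_mul hy.le, Real.rpow_natCast,
              Real.rpow_neg hy.le 2]
            norm_cast
            rw [div_pow, mul_pow]
            push_cast
            ring
    · push Not at h1
      rw [Set.indicator_of_notMem (by simp [h1]), Set.indicator_of_mem (by simpa using h1),
        zero_add]
      calc ((polyKFt r s y - 1) / y) ^ 2 * y ^ (-(2 * β))
          ≤ (1 / y) ^ 2 * y ^ (-(2 * β)) := by
            gcongr ?_ * _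
            rw [div_pow, div_pow, ← sq_abs]
            gcongr
            exact abs_polyKFt_sub_one_le_one hr s y
        _ = y ^ (-2 - 2 * β) := by
            rw [sub_eq_add_neg, Real.rpow_add hy, Real.rpow_neg hy.le 2]
            norm_cast
            rw [one_div, inv_pow]
  have hle : ∀ y, g y ≤ G y + G (-y) := by
    intro y
    rcases lt_trichotomy y 0 with hy | rfl | hy
    · have e : g y = g (-y) := by
        simp only [hg, polyKFt_neg hr, abs_neg, div_neg, neg_sq]
      rw [e]
      linarith [hpos (-y) (by linarith), hG0 y]
    · have : g 0 = 0 := by simp [hg]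
      rw [this]; exact add_nonneg (hG0 _) (hG0 _)
    · linarith [hpos y hy, hG0 (-y)]
  refine (lintegral_mono fun y => ENNReal.ofReal_le_ofReal (hle y)).trans_lt ?_
  have hi : Integrable fun y => G y + G (-y) := hGi.add hGi.comp_neg
  exact (hasFiniteIntegral_iff_ofReal (Eventually.of_forall fun y =>
    add_nonneg (hG0 _) (hG0 _))).1 hi.2

/-- Bias integral, by the substitution `y = h t`. -/
lemma lintegral_bias_le {β C : ℝ} {r s : ℕ} {h : ℝ}
    (hh : 0 < h) {μ : Measure ℝ} (hβ : 0 ≤ β) (hC : 0 < C) (hW : memG3 β C μ) :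
    ∫⁻ t, ENNReal.ofReal (((polyKFt r s (h * t) - 1) / t) ^ 2 * ‖charFn μ t‖ ^ 2) ≤
      ENNReal.ofReal (C ^ 2 * h ^ (2 * β + 1)) *
        ∫⁻ y : ℝ, ENNReal.ofReal (((polyKFt r s y - 1) / y) ^ 2 * |y| ^ (-(2 * β))) := by
  have hK := measurable_polyKFt r s
  set g : ℝ → ℝ := fun y => ((polyKFt r s y - 1) / y) ^ 2 * |y| ^ (-(2 * β)) with hg
  have hgm : Measurable g := by fun_prop
  have hle : ∀ t, ENNReal.ofReal (((polyKFt r s (h * t) - 1) / t) ^ 2 * ‖charFn μ t‖ ^ 2) ≤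
      ENNReal.ofReal (C ^ 2 * h ^ (2 * β + 2)) * ENNReal.ofReal (g (h * t)) := by
    intro t
    rw [← ENNReal.ofReal_mul (by positivity)]
    refine ENNReal.ofReal_le_ofReal ?_
    rcases eq_or_ne t 0 with rfl | ht
    · simp [hg]
    have ht0 : 0 < |t| := abs_pos.2 ht
    have h1 : ‖charFn μ t‖ ≤ C * |t| ^ (-β) := by
      refine (hW.2.1 t).trans (mul_le_mul_of_nonneg_left ?_ hC.le)
      exact Real.rpow_le_rpow_of_nonpos ht0 (by linarith) (by linarith)
    calc ((polyKFt r s (h * t) - 1) / t) ^ 2 * ‖charFn μ t‖ ^ 2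
        ≤ ((polyKFt r s (h * t) - 1) / t) ^ 2 * (C * |t| ^ (-β)) ^ 2 := by gcongr
      _ = _ := by
        simp only [hg]
        rw [abs_mul, abs_of_pos hh, Real.mul_rpow hh.le ht0.le, Real.rpow_neg hh.le (2 * β),
          Real.rpow_add hh, mul_pow C, ← Real.rpow_natCast (|t| ^ (-β)), ← Real.rpow_mul ht0.le]
        have : h ^ (2 * β) ≠ 0 := (Real.rpow_pos_of_pos hh _).ne'
        have e : -β * ((2 : ℕ) : ℝ) = -(2 * β) := by push_cast; ring
        have e2 : h ^ (2 : ℝ) = h ^ 2 := by norm_cast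
        rw [e, e2]
        field_simp
  refine (lintegral_mono hle).trans (le_of_eq ?_)
  rw [lintegral_const_mul _ (by fun_prop),
    lintegral_comp_mul_left_real (f := fun y => ENNReal.ofReal (g y)) (by fun_prop) hh,
    ← mul_assoc, ← ENNReal.ofReal_mul (by positivity)]
  congr 2
  have : h ^ (2 * β + 2) = h ^ (2 * β + 1) * h := by
    rw [← Real.rpow_add_one hh.ne']; congr 1; ring
  rw [this]; field_simp

/-- **Theorem 3.2, (3.9).** Mean integrated squared error bound for `F̂_W(⋅|h)`:
for a constant `B` depending only on `C₁, C₂, r, s, α, β`,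
`∫ E(F̂_W(x|h) − F_W(x))² dx ≤ B (h^{2β+1} + n⁻¹(1 + h^{-(2α−1)} ℓ_h))`
uniformly over `F_δ ∈ ℱ₃(α,C₁)`, `F_W ∈ 𝒢₃(β,C₂)`, `0 ≤ h ≤ 1`, `n ≥ 1`. -/
theorem sup_MISE_dist_estimator_bandwidth_le
    (α β : ℝ) (hα : 0 < α) (hβ : 0 ≤ β)
    (r s : ℕ) (hr : 2 ≤ r) (hrEven : Even r) (hs : 1 ≤ s) (hrβ : β + 1 / 2 < r)
    (C₁ C₂ : ℝ) (hC₁ : 0 < C₁) (hC₂ : 0 < C₂) :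
    ∃ B > (0 : ℝ), ∀ h : ℝ, 0 ≤ h → h ≤ 1 → ∀ n : ℕ, 1 ≤ n →
      ∀ (μδ : Measure ℝ) (fδ : ℝ → ℝ), memF3 α C₁ μδ fδ →
      ∀ μW : Measure ℝ, memG3 β C₂ μW →
        (∫⁻ x : ℝ, riskSq μW μδ n (fun X => FhatD fδ (polyKFt r s) h X x) (cdfF μW x)) ≤
          ENNReal.ofReal B *
            (ENNReal.ofReal h ^ (2 * β + 1) +
              (n : ℝ≥0∞)⁻¹ *
                (1 + ENNReal.ofReal h ^ (-(2 * α - 1)) * ENNReal.ofReal (ellh α h))) := by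
  set J := ∫⁻ y : ℝ, ENNReal.ofReal (((polyKFt r s y - 1) / y) ^ 2 * |y| ^ (-(2 * β))) with hJ
  have hJt : J < ⊤ := lintegral_bias_profile_lt_top hβ hrEven hs hrβ
  set E := (2 * ((s + C₁) * (C₁ * 2 ^ α)) ^ 2 + 4) * Real.pi with hE
  set D := 4 * (C₁ * 2 ^ α) ^ 2 with hD
  have hE0 : 0 < E := by positivity
  have hD0 : 0 < D := by positivity
  set B := C₂ ^ 2 * J.toReal + (2 * E + 2 * (C₂ + C₁)) + 2 * D with hB
  have hB0 : 0 < B := by positivity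
  refine ⟨B, hB0, ?_⟩
  intro h hh0 hh1 n hn μδ fδ hF μW hW
  have hα1 := one_lt_of_memF3 hF
  have hell : ellh α h = 1 := if_neg (by linarith)
  have hn0 : (n : ℝ≥0∞)⁻¹ ≠ 0 := by simp
  rw [hell, ENNReal.ofReal_one, mul_one]
  -- at `h = 0` the exponent `-(2α - 1)` is negative, so the right-hand side is `⊤`
  rcases hh0.eq_or_lt with rfl | hh
  · have : ENNReal.ofReal 0 ^ (-(2 * α - 1)) = ⊤ := by
      rw [ENNReal.ofReal_zero]; exact ENNReal.zero_rpow_of_neg (by linarith)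
    rw [this, add_top, ENNReal.mul_top hn0, add_top,
      ENNReal.mul_top (by simpa using hB0)]
    exact le_top
  have := hW.1
  have hmain := lintegral_riskSq_le (h := h) (KFt := polyKFt r s) hF.1 (fun t => (hF.2.1 t).ne')
    hF.2.2.2.2 hW.2.2 (measurable_polyKFt r s) (measurable_of_realCharFn hF.1)
    (polyKFt_neg hrEven s) (even_of_realCharFn hF.1) (integrable_kv hF hα hrEven hC₁ hh)
    (integrable_polyKFt hrEven hh) (abs_kv_sub_one_le_global hF hα hC₁ hr hrEven hs hh hh1)
    (cb := s) (fun t => by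
      refine (abs_polyKFt_sub_one_le hr hrEven hs _).trans ?_
      rw [abs_mul, abs_of_pos hh]
      gcongr
      exact mul_le_of_le_one_left (abs_nonneg t) hh1) hn
  have hV := lintegral_kv_sq_le (s := s) hF hα1 hC₁ hr hrEven hs hh hh1
  have hBi := lintegral_bias_le (r := r) (s := s) hh hβ hC₂ hW
  rw [← hJ] at hBi
  rw [← hE, ← hD] at hV
  clear_value E D
  rw [ENNReal.ofReal_rpow_of_pos hh, ENNReal.ofReal_rpow_of_pos hh]
  set P := ENNReal.ofReal (h ^ (2 * β + 1))
  set Q := ENNReal.ofReal (h ^ (-(2 * α - 1)))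
  have hb1 : ENNReal.ofReal (C₂ ^ 2 * h ^ (2 * β + 1)) * J ≤ ENNReal.ofReal B * P := by
    rw [← ENNReal.ofReal_toReal hJt.ne, ← ENNReal.ofReal_mul (by positivity),
      ← ENNReal.ofReal_mul hB0.le]
    refine ENNReal.ofReal_le_ofReal ?_
    have h1 : C₂ ^ 2 * J.toReal ≤ B := by
      rw [hB]; nlinarith
    have := mul_le_mul_of_nonneg_right h1 (by positivity : 0 ≤ h ^ (2 * β + 1))
    linarith
  have hb2 : 2 * (ENNReal.ofReal E + ENNReal.ofReal D * Q) +
      2 * (ENNReal.ofReal C₂ + ENNReal.ofReal C₁) ≤ ENNReal.ofReal B * (1 + Q) := by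
    have hJ0 : 0 ≤ C₂ ^ 2 * J.toReal := by positivity
    have e : 2 * (ENNReal.ofReal E + ENNReal.ofReal D * Q) +
      2 * (ENNReal.ofReal C₂ + ENNReal.ofReal C₁) =
        ENNReal.ofReal (2 * E + 2 * (C₂ + C₁)) * 1 + ENNReal.ofReal (2 * D) * Q := by
      rw [ENNReal.ofReal_add (by positivity) (by positivity), ENNReal.ofReal_mul zero_le_two,
        ENNReal.ofReal_mul zero_le_two, ENNReal.ofReal_mul zero_le_two,
        ENNReal.ofReal_add hC₂.le hC₁.le, ENNReal.ofReal_ofNat]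
      ring
    rw [e, mul_add (ENNReal.ofReal B)]
    refine add_le_add (mul_le_mul' (ENNReal.ofReal_le_ofReal ?_) le_rfl)
      (mul_le_mul' (ENNReal.ofReal_le_ofReal ?_) le_rfl)
    · linarith
    · linarith
  refine hmain.trans ?_
  rw [mul_add (ENNReal.ofReal B), add_comm]
  refine add_le_add (hBi.trans hb1) ?_
  rw [mul_left_comm (ENNReal.ofReal B)]
  refine mul_le_mul' le_rfl (le_trans ?_ hb2)
  exact add_le_add (mul_le_mul' le_rfl hV) le_rfl

end
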